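/- arXiv:math/0610540 — 2 statements merged into one kernel-verified Lean document; each statement's English description precedes it below -/
import Mathlib

section
/- For every real C > 0 there exist constants A > 0 and B such that for every integer n ≥ 1 and every partition λ of n whose number of rows and number of columns are both at most C·√n, one has ∑ |χ^λ(π)|⁴ ≤ B, where the sum runs over all permutations π ∈ S_n with |π| ≤ A·n^{4/7}. -/
open scoped BigOperators

/-- `|π|`: the minimal number of transpositions whose product is `π`; equivalently
`n` minus the number of orbits of `π`. -/
def permLength {n : ℕ} (π : Equiv.Perm (Fin n)) : ℕ :=
  π.cycleType.sum - π.cycleType.card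

/-- The full cycle type of `π ∈ S_n`: the cycle type together with `1`s for fixed points. -/
def fullCycleType {n : ℕ} (π : Equiv.Perm (Fin n)) : Multiset ℕ :=
  π.cycleType + Multiset.replicate (n - π.cycleType.sum) 1

/-- For a partition `λ` of `n` (given as an antitone `lam : Fin n → ℕ`) and a multiset
`k` of positive integers, the irreducible character value `Tr ρ^λ(k)`, defined via
Frobenius' character formula as the coefficient of `x^(λ+δ)` in
`(∑ᵢ xᵢ^{k₁}) ⋯ (∑ᵢ xᵢ^{k_r}) ⋅ ∑_{w ∈ Sₙ} sgn(w) x^{wδ}`, where `δ = (n-1, …, 1, 0)`. -/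
noncomputable def frobChar (n : ℕ) (lam : Fin n → ℕ) (k : Multiset ℕ) : ℤ :=
  MvPolynomial.coeff
    (Finsupp.equivFunOnFinite.symm fun i : Fin n => lam i + (n - 1 - (i : ℕ)))
    ((Multiset.map (fun m => ∑ i : Fin n, MvPolynomial.X i ^ m) k).prod *
      ∑ w : Equiv.Perm (Fin n),
        MvPolynomial.C ((Equiv.Perm.sign w : ℤ)) *
          ∏ i : Fin n, MvPolynomial.X i ^ (n - 1 - ((w i : ℕ))))

/-- The normalized character `χ^λ(π) = Tr ρ^λ(π) / Tr ρ^λ(e)`. -/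
noncomputable def normChar (n : ℕ) (lam : Fin n → ℕ) (π : Equiv.Perm (Fin n)) : ℝ :=
  (frobChar n lam (fullCycleType π) : ℝ) / (frobChar n lam (Multiset.replicate n 1) : ℝ)

/-!
Multiplication of class functions by the sum of all transpositions is the cut-and-join operator `Δ`
on power sum monomials, and the functional `φ_u` extracting the coefficient of `x ^ u`, `u = λ + δ`,
in Frobenius' formula is an eigenfunctional of `Δ`. Marking a point yields a Jucys-Murphy element
`J`, which commutes with the lift of `Δ` to marked cycle types. Comparing eigenvalues,
`φ_u (J ^ q g)` is the sum of `c ^ q * φ_{u'} (g)` over the diagrams obtained from `λ` by removing a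
box of content `c`, and `|c| ≤ C √n` since `λ` is balanced.

On the other hand, applied to a marked cycle of length `m` in the presence of `r + 1` other fixed
points, `J` produces `r + 1` copies of a marked cycle of length `m + 1`, up to terms in which cycles
are joined or cut. Solving for the longer cycle and inducting on the size of the cycle type bounds
the normalized character by `∏ j ^ (-α) η ^ (j - 1)` over the cycle lengths `j` of `π`, where
`η ^ 2` is of order `|π| ^ (1 - α) / n`, as long as `|π| ^ (1 + α)` is at most a small multiple of
`n`. Since `∑ x ^ |π| = ∏ (1 + i x)`, there are at most `(e n ^ 2 / l) ^ l` permutations of length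
`l`, so their contribution to the fourth moment is at most `(const * l ^ (1 - 2 α)) ^ l`. This is
summable for `α > 1 / 2`, which allows lengths up to `n ^ θ / 12` for every `θ < 2 / 3`.
-/

namespace CutAndJoin

open Finset MvPolynomial

noncomputable section

section RingCommutator

variable {R : Type*} [Ring R]

lemma ring_lie_lie (a b c : R) : ⁅⁅a, b⁆, c⁆ = ⁅a, ⁅b, c⁆⁆ - ⁅b, ⁅a, c⁆⁆ :=
  letI := LieRing.ofAssociativeRing (A := R)
  lie_lie a b c

lemma ring_lie_skew (a b : R) : -⁅b, a⁆ = ⁅a, b⁆ :=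
  letI := LieRing.ofAssociativeRing (A := R)
  lie_skew a b

lemma lie_mul_sub_lie_eq {J W κ y z : R} (hJ : ⁅J, y⁆ = κ) (hκ : κ * W = (W - 2 • z) * κ)
    (hyz : Commute y z) :
    ⁅J, 2 • (y * z)⁆ - ⁅W, κ⁆ = -⁅z, 2 • (y * J) + 2 • κ⁆ := by
  have hJ' : J * y = y * J + κ := sub_eq_iff_eq_add'.mp hJ
  have hJyz : J * (y * z) = y * (J * z) + κ * z := by
    rw [← mul_assoc, hJ', add_mul, mul_assoc]
  have hyzJ : y * (z * J) = z * (y * J) := by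
    rw [← mul_assoc, hyz.eq, mul_assoc]
  simp only [Ring.lie_def, mul_smul_comm, smul_mul_assoc, mul_add, add_mul, sub_mul, mul_assoc, hκ,
    hJyz, hyzJ]
  noncomm_ring

lemma lie_add_eq_lie {J T κ y : R} (hJ : ⁅J, y⁆ = κ) (hT : T * κ = κ * T + 2 • (J * κ)) :
    ⁅J, 2 • (y * J) + 2 • κ⁆ = ⁅T, κ⁆ := by
  have hJ' : J * y = y * J + κ := sub_eq_iff_eq_add'.mp hJ
  have hJyJ : J * (y * J) = y * (J * J) + κ * J := by
    rw [← mul_assoc, hJ', add_mul, mul_assoc]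
  simp only [Ring.lie_def, mul_smul_comm, smul_mul_assoc, mul_add, add_mul, mul_assoc, hT, hJyJ]
  noncomm_ring

end RingCommutator

section Operators

variable (K : Type*) [CommRing K]

/-- Polynomials in formal power sums, the variable `X j` standing for `p_j`.  The monomial
`p_{k₁} ⋯ p_{k_r}` encodes the cycle type `(k₁, …, k_r)`. -/
abbrev PowerSums := MvPolynomial ℕ K

/-- Cycle types in which one point is marked: the power `y ^ m` of the polynomial variable stands
for a marked cycle of length `m + 1`, and the coefficients encode the remaining cycles. -/
abbrev MarkedPowerSums := Polynomial (PowerSums K)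

local notation "𝐲" => (Polynomial.X : MarkedPowerSums K)

/-- The derivation `p_j ↦ j y ^ (j - 1)`, which sums over all ways to mark a point. -/
def mark : Derivation K (PowerSums K) (MarkedPowerSums K) :=
  mkDerivation K fun j => (j : MarkedPowerSums K) * 𝐲 ^ (j - 1)

/-- The substitution `y ^ m ↦ p_{m + 1}`, which forgets the mark. -/
def forgetMark : MarkedPowerSums K →ₗ[K] PowerSums K :=
  Polynomial.lsum fun m => LinearMap.mulLeft K (X (m + 1))

/-- The derivation `p_j ↦ j p_{a + j}`, which joins a cycle of length `a` to the other cycles. -/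
def joinCycle (a : ℕ) : Derivation K (PowerSums K) (PowerSums K) :=
  mkDerivation K fun j => (j : PowerSums K) * X (a + j)

/-- The sum over all ordered splittings of a cycle of length `a`. -/
def splitCycle (a : ℕ) : PowerSums K := ∑ i ∈ Ico 1 a, X i * X (a - i)

/-- Multiplication by the sum of all transpositions that move the marked point, a Jucys-Murphy
element.  Such a transposition either joins the marked cycle to another one, or cuts it. -/
def jucysMurphy : Module.End K (MarkedPowerSums K) :=
  Polynomial.lsum fun m =>
    LinearMap.mulLeft K (𝐲 ^ (m + 1)) ∘ₗ (mark K : PowerSums K →ₗ[K] MarkedPowerSums K) +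
      ∑ i ∈ Ico 1 (m + 1), LinearMap.mulLeft K (Polynomial.C (X i) * 𝐲 ^ (m - i)) ∘ₗ
        Polynomial.CAlgHom.toLinearMap

/-- The cut-and-join operator: multiplication by twice the sum of all transpositions. -/
def cutAndJoin : Module.End K (PowerSums K) :=
  forgetMark K ∘ₗ jucysMurphy K ∘ₗ (mark K : PowerSums K →ₗ[K] MarkedPowerSums K)

/-- The lift of the cut-and-join operator to marked cycle types: multiplication by twice the sum of
all transpositions. -/
def markedCutAndJoin : Module.End K (MarkedPowerSums K) :=
  Polynomial.lsum fun m =>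
    LinearMap.mulLeft K (𝐲 ^ m) ∘ₗ Polynomial.CAlgHom.toLinearMap ∘ₗ cutAndJoin K +
      (2 * (m + 1)) • LinearMap.mulLeft K (𝐲 ^ (m + 1)) ∘ₗ
        (mark K : PowerSums K →ₗ[K] MarkedPowerSums K) +
      ∑ i ∈ Ico 1 (m + 1), (2 * (m + 1 - i)) •
        LinearMap.mulLeft K (Polynomial.C (X i) * 𝐲 ^ (m - i)) ∘ₗ
          Polynomial.CAlgHom.toLinearMap

/-- The operator `⁅T, p_a⁆ / a`, where `T` is the marked cut-and-join operator and `p_a` acts by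
multiplication. -/
def attachCycle (a : ℕ) : Module.End K (MarkedPowerSums K) :=
  Polynomial.lsum fun m =>
    LinearMap.mulLeft K (𝐲 ^ m) ∘ₗ Polynomial.CAlgHom.toLinearMap ∘ₗ
        (2 • (joinCycle K a : PowerSums K →ₗ[K] PowerSums K) +
          LinearMap.mulLeft K (splitCycle K a)) +
      (2 * (m + 1)) • LinearMap.mulLeft K (𝐲 ^ (m + a)) ∘ₗ Polynomial.CAlgHom.toLinearMap

/-- Forgets the mark and marks a new fixed point. -/
def renewMark : Module.End K (MarkedPowerSums K) :=
  Polynomial.CAlgHom.toLinearMap ∘ₗ forgetMark K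

end Operators

section LinearMapExt

variable {R A M : Type*} [CommSemiring R] [AddCommMonoid M] [Module R M]

lemma lsum_C_mul_X_pow [Semiring A] [Module R A] (f : ℕ → A →ₗ[R] M) (a : A) (m : ℕ) :
    Polynomial.lsum f (Polynomial.C a * Polynomial.X ^ m) = f m a := by
  rw [Polynomial.C_mul_X_pow_eq_monomial, Polynomial.lsum_apply]
  exact Polynomial.sum_monomial_index _ _ (map_zero _)

lemma linearMap_ext_C_mul_X_pow [Semiring A] [Module R A] {S T : Polynomial A →ₗ[R] M}
    (h : ∀ a m, S (Polynomial.C a * Polynomial.X ^ m) = T (Polynomial.C a * Polynomial.X ^ m)) :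
    S = T := by
  ext1 F
  induction F using Polynomial.induction_on' with
  | add F G hF hG => rw [map_add, map_add, hF, hG]
  | monomial m a => simpa only [Polynomial.C_mul_X_pow_eq_monomial] using h a m

lemma linearMap_ext_X_mul {σ : Type*} {S T : MvPolynomial σ R →ₗ[R] M} (h_one : S 1 = T 1)
    (h_X_mul : ∀ i f, S f = T f → S (X i * f) = T (X i * f)) : S = T := by
  refine LinearMap.ext fun f => ?_
  induction f using MvPolynomial.induction_on with
  | C c => rw [C_eq_smul_one, map_smul, map_smul, h_one]
  | add f g hf hg => rw [map_add, map_add, hf, hg]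
  | mul_X f i h => rw [mul_comm, h_X_mul i f h]

end LinearMapExt

section Commutators

variable {K : Type*} [CommRing K]

local notation "𝐲" => (Polynomial.X : MarkedPowerSums K)
local notation "𝐂" => (Polynomial.C : PowerSums K →+* MarkedPowerSums K)
local notation "μ" => Algebra.lmul K (MarkedPowerSums K)
local notation "𝐩[" b "]" => Algebra.lmul K (MarkedPowerSums K) (Polynomial.C (X b))

lemma forgetMark_C_mul_X_pow (g : PowerSums K) (m : ℕ) :
    forgetMark K (𝐂 g * 𝐲 ^ m) = X (m + 1) * g := by
  rw [forgetMark, lsum_C_mul_X_pow, LinearMap.mulLeft_apply]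

lemma forgetMark_C (g : PowerSums K) : forgetMark K (𝐂 g) = X 1 * g := by
  simpa using forgetMark_C_mul_X_pow g 0

lemma jucysMurphy_C_mul_X_pow (g : PowerSums K) (m : ℕ) :
    jucysMurphy K (𝐂 g * 𝐲 ^ m) =
      𝐲 ^ (m + 1) * mark K g + ∑ i ∈ Ico 1 (m + 1), 𝐂 (X i * g) * 𝐲 ^ (m - i) := by
  rw [jucysMurphy, lsum_C_mul_X_pow]
  simp only [LinearMap.add_apply, LinearMap.sum_apply, LinearMap.comp_apply,
    LinearMap.mulLeft_apply, Derivation.coeFn_coe, AlgHom.toLinearMap_apply,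
    Polynomial.CAlgHom_apply, mul_right_comm _ (𝐲 ^ _), map_mul]

lemma markedCutAndJoin_C_mul_X_pow (g : PowerSums K) (m : ℕ) :
    markedCutAndJoin K (𝐂 g * 𝐲 ^ m) =
      𝐂 (cutAndJoin K g) * 𝐲 ^ m + (2 * (m + 1)) • (𝐲 ^ (m + 1) * mark K g) +
        ∑ i ∈ Ico 1 (m + 1), (2 * (m + 1 - i)) • (𝐂 (X i * g) * 𝐲 ^ (m - i)) := by
  rw [markedCutAndJoin, lsum_C_mul_X_pow]
  simp only [LinearMap.add_apply, LinearMap.sum_apply, LinearMap.smul_apply, LinearMap.comp_apply,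
    LinearMap.mulLeft_apply, Derivation.coeFn_coe, AlgHom.toLinearMap_apply,
    Polynomial.CAlgHom_apply, mul_right_comm _ (𝐲 ^ _), mul_comm (𝐲 ^ m), map_mul]

lemma attachCycle_C_mul_X_pow (a : ℕ) (g : PowerSums K) (m : ℕ) :
    attachCycle K a (𝐂 g * 𝐲 ^ m) =
      𝐂 (2 • joinCycle K a g + splitCycle K a * g) * 𝐲 ^ m +
        (2 * (m + 1)) • (𝐂 g * 𝐲 ^ (m + a)) := by
  rw [attachCycle, lsum_C_mul_X_pow]
  simp only [LinearMap.add_apply, LinearMap.smul_apply, LinearMap.comp_apply,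
    LinearMap.mulLeft_apply, Derivation.coeFn_coe, AlgHom.toLinearMap_apply,
    Polynomial.CAlgHom_apply, mul_comm (𝐲 ^ _)]

lemma natCast_mul_X_pow_pred {R : Type*} [CommSemiring R] (x : R) (j : ℕ) :
    (j : R) * x ^ (j - 1) * x = j * x ^ j := by
  cases j with
  | zero => simp
  | succ j => rw [Nat.add_sub_cancel, pow_succ, mul_assoc]

lemma mark_X_mul (a : ℕ) (g : PowerSums K) :
    mark K (X a * g) = 𝐂 (X a) * mark K g + a • (𝐂 g * 𝐲 ^ (a - 1)) := by
  rw [Derivation.leibniz, mark, mkDerivation_X, Algebra.smul_def, Algebra.smul_def,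
    Polynomial.algebraMap_eq, nsmul_eq_mul, mul_left_comm]

lemma joinCycle_X_mul (b a : ℕ) (g : PowerSums K) :
    joinCycle K b (X a * g) = X a * joinCycle K b g + a • (X (b + a) * g) := by
  rw [Derivation.leibniz, joinCycle, mkDerivation_X, smul_eq_mul, smul_eq_mul, nsmul_eq_mul]
  ring

lemma X_pow_succ_mul_mark_X_mul (m a : ℕ) (g : PowerSums K) :
    𝐲 ^ (m + 1) * mark K (X a * g) =
      𝐂 (X a) * (𝐲 ^ (m + 1) * mark K g) + a • (𝐂 g * 𝐲 ^ (m + a)) := by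
  have h_pow := natCast_mul_X_pow_pred 𝐲 a
  rw [mark_X_mul, nsmul_eq_mul, nsmul_eq_mul, pow_add]
  linear_combination 𝐲 ^ m * 𝐂 g * h_pow

lemma forgetMark_C_mul (f : PowerSums K) (G : MarkedPowerSums K) :
    forgetMark K (𝐂 f * G) = f * forgetMark K G := by
  suffices h : forgetMark K ∘ₗ LinearMap.mulLeft K (𝐂 f) = LinearMap.mulLeft K f ∘ₗ forgetMark K
    from LinearMap.congr_fun h G
  refine linearMap_ext_C_mul_X_pow fun g m => ?_
  simp only [LinearMap.comp_apply, LinearMap.mulLeft_apply, ← mul_assoc, ← map_mul,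
    forgetMark_C_mul_X_pow]
  ring

lemma forgetMark_X_pow_mul_mark (a : ℕ) (g : PowerSums K) :
    forgetMark K (𝐲 ^ a * mark K g) = joinCycle K a g := by
  suffices h : forgetMark K ∘ₗ LinearMap.mulLeft K (𝐲 ^ a) ∘ₗ
      (mark K : PowerSums K →ₗ[K] MarkedPowerSums K) = joinCycle K a
    from LinearMap.congr_fun h g
  refine linearMap_ext_X_mul (by simp) fun b g h => ?_
  simp only [LinearMap.comp_apply, LinearMap.mulLeft_apply, Derivation.coeFn_coe] at h ⊢
  rw [mark_X_mul, mul_add, mul_left_comm, map_add, forgetMark_C_mul, h, mul_smul_comm, map_nsmul,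
    mul_left_comm, ← pow_add, forgetMark_C_mul_X_pow, joinCycle_X_mul]
  cases b with
  | zero => simp
  | succ b => rfl

lemma lmul_apply (F G : MarkedPowerSums K) : μ F G = F * G := rfl

lemma lmul_C_apply (b : ℕ) (g : PowerSums K) (m : ℕ) :
    𝐩[b] (𝐂 g * 𝐲 ^ m) = 𝐂 (X b * g) * 𝐲 ^ m := by
  rw [lmul_apply, map_mul, mul_assoc]

lemma lmul_X_apply (g : PowerSums K) (m : ℕ) : μ 𝐲 (𝐂 g * 𝐲 ^ m) = 𝐂 g * 𝐲 ^ (m + 1) := by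
  rw [lmul_apply, mul_left_comm, pow_succ']

lemma renewMark_C_mul_X_pow (g : PowerSums K) (m : ℕ) :
    renewMark K (𝐂 g * 𝐲 ^ m) = 𝐂 (X (m + 1) * g) := by
  rw [renewMark, LinearMap.comp_apply, forgetMark_C_mul_X_pow]
  rfl

lemma sum_Ico_C_mul (f : ℕ → ℕ) (b : ℕ) (g : PowerSums K) (m : ℕ) :
    ∑ i ∈ Ico 1 (m + 1), f i • (𝐂 (X i * (X b * g)) * 𝐲 ^ (m - i)) =
      𝐂 (X b) * ∑ i ∈ Ico 1 (m + 1), f i • (𝐂 (X i * g) * 𝐲 ^ (m - i)) := by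
  simp only [mul_sum, nsmul_eq_mul, map_mul]
  exact sum_congr rfl fun i _ => by ring

lemma lie_jucysMurphy_lmul_C (b : ℕ) : ⁅jucysMurphy K, 𝐩[b]⁆ = b • μ (𝐲 ^ b) := by
  rw [Ring.lie_def, sub_eq_iff_eq_add]
  refine linearMap_ext_C_mul_X_pow fun g m => ?_
  have h_sum := sum_Ico_C_mul 1 b g m
  simp only [Pi.one_apply, one_smul] at h_sum
  simp only [Module.End.mul_apply, LinearMap.add_apply, LinearMap.smul_apply, lmul_C_apply]
  rw [jucysMurphy_C_mul_X_pow, jucysMurphy_C_mul_X_pow, X_pow_succ_mul_mark_X_mul, h_sum,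
    lmul_apply, lmul_apply]
  ring

lemma lie_jucysMurphy_lmul_X : ⁅jucysMurphy K, μ 𝐲⁆ = renewMark K := by
  rw [Ring.lie_def, sub_eq_iff_eq_add]
  refine linearMap_ext_C_mul_X_pow fun g m => ?_
  have h_sum : 𝐲 * ∑ i ∈ Ico 1 (m + 1), 𝐂 (X i * g) * 𝐲 ^ (m - i) =
      ∑ i ∈ Ico 1 (m + 1), 𝐂 (X i * g) * 𝐲 ^ (m + 1 - i) := by
    rw [mul_sum]
    refine sum_congr rfl fun i hi => ?_
    rw [Nat.succ_sub (Nat.lt_succ_iff.mp (mem_Ico.mp hi).2), mul_left_comm, pow_succ']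
  simp only [Module.End.mul_apply, LinearMap.add_apply, lmul_X_apply, renewMark_C_mul_X_pow]
  rw [jucysMurphy_C_mul_X_pow, jucysMurphy_C_mul_X_pow, sum_Ico_succ_top (Nat.le_add_left 1 m),
    lmul_apply, mul_add, h_sum, Nat.sub_self, pow_zero, mul_one]
  ring

lemma cutAndJoin_X_mul (a : ℕ) (g : PowerSums K) :
    cutAndJoin K (X a * g) =
      X a * cutAndJoin K g + a • (2 • joinCycle K a g + splitCycle K a * g) := by
  have hJ := LinearMap.congr_fun (lie_jucysMurphy_lmul_C (K := K) a) (mark K g)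
  rw [Ring.lie_def, LinearMap.sub_apply, Module.End.mul_apply, Module.End.mul_apply,
    LinearMap.smul_apply, lmul_apply, lmul_apply, lmul_apply,
    sub_eq_iff_eq_add] at hJ
  have h_new : a • forgetMark K (jucysMurphy K (𝐂 g * 𝐲 ^ (a - 1))) =
      a • (joinCycle K a g + splitCycle K a * g) := by
    cases a with
    | zero => simp
    | succ a =>
      rw [Nat.add_sub_cancel, jucysMurphy_C_mul_X_pow, map_add, map_sum,
        forgetMark_X_pow_mul_mark, splitCycle, sum_mul]
      congr 2
      refine sum_congr rfl fun i hi => ?_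
      rw [forgetMark_C_mul_X_pow, Nat.succ_sub (Nat.lt_succ_iff.mp (mem_Ico.mp hi).2)]
      ring
  simp only [cutAndJoin, LinearMap.comp_apply, Derivation.coeFn_coe]
  rw [mark_X_mul, map_add, map_add, hJ, map_add, map_nsmul, map_nsmul, map_nsmul,
    forgetMark_X_pow_mul_mark, forgetMark_C_mul, h_new]
  simp only [nsmul_eq_mul]
  ring

lemma lie_markedCutAndJoin_lmul_C (a : ℕ) :
    ⁅markedCutAndJoin K, 𝐩[a]⁆ = a • attachCycle K a := by
  rw [Ring.lie_def, sub_eq_iff_eq_add]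
  refine linearMap_ext_C_mul_X_pow fun g m => ?_
  simp only [Module.End.mul_apply, LinearMap.add_apply, LinearMap.smul_apply, lmul_C_apply]
  rw [markedCutAndJoin_C_mul_X_pow, markedCutAndJoin_C_mul_X_pow, attachCycle_C_mul_X_pow,
    X_pow_succ_mul_mark_X_mul, sum_Ico_C_mul, lmul_apply, cutAndJoin_X_mul]
  simp only [map_add, map_mul, nsmul_eq_mul, map_natCast]
  ring

lemma lie_markedCutAndJoin_lmul_X :
    ⁅markedCutAndJoin K, μ 𝐲⁆ = 2 • (μ 𝐲 * jucysMurphy K) + 2 • renewMark K := by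
  rw [Ring.lie_def, sub_eq_iff_eq_add]
  refine linearMap_ext_C_mul_X_pow fun g m => ?_
  have h_sum : ∑ i ∈ Ico 1 (m + 1), (2 * (m + 1 + 1 - i)) • (𝐂 (X i * g) * 𝐲 ^ (m + 1 - i)) =
      2 • (𝐲 * ∑ i ∈ Ico 1 (m + 1), 𝐂 (X i * g) * 𝐲 ^ (m - i)) +
        𝐲 * ∑ i ∈ Ico 1 (m + 1), (2 * (m + 1 - i)) • (𝐂 (X i * g) * 𝐲 ^ (m - i)) := by
    rw [mul_sum, mul_sum, smul_sum, ← sum_add_distrib]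
    refine sum_congr rfl fun i hi => ?_
    have hi' : i ≤ m := Nat.lt_succ_iff.mp (mem_Ico.mp hi).2
    rw [Nat.succ_sub (hi'.trans m.le_succ), Nat.succ_sub hi', pow_succ']
    simp only [nsmul_eq_mul]
    push_cast
    ring
  simp only [Module.End.mul_apply, LinearMap.add_apply, LinearMap.smul_apply, lmul_X_apply,
    renewMark_C_mul_X_pow]
  rw [markedCutAndJoin_C_mul_X_pow, markedCutAndJoin_C_mul_X_pow, jucysMurphy_C_mul_X_pow,
    sum_Ico_succ_top (Nat.le_add_left 1 m), h_sum, lmul_apply, lmul_apply,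
    Nat.sub_self, pow_zero, mul_one]
  simp only [nsmul_eq_mul, show m + 1 + 1 - (m + 1) = 1 by lia]
  push_cast
  ring

lemma lie_attachCycle_lmul_C (a b : ℕ) :
    ⁅attachCycle K a, 𝐩[b]⁆ = (2 * b) • 𝐩[a + b] := by
  rw [Ring.lie_def, sub_eq_iff_eq_add]
  refine linearMap_ext_C_mul_X_pow fun g m => ?_
  simp only [Module.End.mul_apply, LinearMap.add_apply, LinearMap.smul_apply, lmul_C_apply]
  rw [attachCycle_C_mul_X_pow, attachCycle_C_mul_X_pow, joinCycle_X_mul, lmul_apply]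
  simp only [map_add, map_mul, nsmul_eq_mul, map_natCast]
  push_cast
  ring

lemma lie_attachCycle_lmul_X_pow (a b : ℕ) :
    ⁅attachCycle K a, μ (𝐲 ^ b)⁆ = (2 * b) • μ (𝐲 ^ (a + b)) := by
  rw [Ring.lie_def, sub_eq_iff_eq_add]
  refine linearMap_ext_C_mul_X_pow fun g m => ?_
  simp only [Module.End.mul_apply, LinearMap.add_apply, LinearMap.smul_apply, lmul_apply]
  rw [mul_left_comm, ← pow_add, attachCycle_C_mul_X_pow, attachCycle_C_mul_X_pow]
  simp only [nsmul_eq_mul]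
  push_cast
  ring

lemma renewMark_mul_attachCycle (a : ℕ) :
    renewMark K * attachCycle K a = (attachCycle K a - 2 • μ (𝐲 ^ a)) * renewMark K := by
  refine linearMap_ext_C_mul_X_pow fun g m => ?_
  have hW := attachCycle_C_mul_X_pow (K := K) a (X (m + 1) * g) 0
  rw [pow_zero, mul_one, zero_add, zero_add] at hW
  rw [Module.End.mul_apply, Module.End.mul_apply, LinearMap.sub_apply, LinearMap.smul_apply,
    renewMark_C_mul_X_pow, hW, attachCycle_C_mul_X_pow, map_add, map_nsmul,
    renewMark_C_mul_X_pow, renewMark_C_mul_X_pow, joinCycle_X_mul, lmul_apply]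
  simp only [map_add, map_mul, nsmul_eq_mul, map_natCast, ← add_assoc, add_comm a m]
  push_cast
  ring

lemma jucysMurphy_one : jucysMurphy K 1 = 0 := by
  simpa using jucysMurphy_C_mul_X_pow (K := K) 1 0

lemma cutAndJoin_one : cutAndJoin K 1 = 0 := by
  simp [cutAndJoin]

lemma markedCutAndJoin_one : markedCutAndJoin K 1 = 0 := by
  simpa [cutAndJoin_one] using markedCutAndJoin_C_mul_X_pow (K := K) 1 0

lemma attachCycle_one (a : ℕ) : attachCycle K a 1 = 𝐂 (splitCycle K a) + 2 • 𝐲 ^ a := by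
  simpa using attachCycle_C_mul_X_pow (K := K) a 1 0

lemma end_ext_of_lie {A B : Module.End K (MarkedPowerSums K)}
    (h_C : ∀ b, ⁅A, 𝐩[b]⁆ = ⁅B, 𝐩[b]⁆) (h_X : ⁅A, μ 𝐲⁆ = ⁅B, μ 𝐲⁆) (h_one : A 1 = B 1) : A = B := by
  have map_mul_of_lie {F : MarkedPowerSums K} (hF : ⁅A, μ F⁆ = ⁅B, μ F⁆) {G : MarkedPowerSums K}
      (hG : A G = B G) : A (F * G) = B (F * G) := by
    have hFG := LinearMap.congr_fun hF G
    simpa only [Ring.lie_def, LinearMap.sub_apply, Module.End.mul_apply, lmul_apply, hG,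
      sub_left_inj] using hFG
  refine linearMap_ext_C_mul_X_pow fun g m => ?_
  induction m with
  | zero =>
    rw [pow_zero, mul_one]
    suffices h : A ∘ₗ Polynomial.CAlgHom.toLinearMap = B ∘ₗ Polynomial.CAlgHom.toLinearMap
      from LinearMap.congr_fun h g
    refine linearMap_ext_X_mul (by simpa using h_one) fun b g hg => ?_
    simpa using map_mul_of_lie (h_C b) (by simpa using hg)
  | succ m ih => simpa only [pow_succ', mul_left_comm] using map_mul_of_lie h_X ih

lemma sum_Ico_reflect_sub {M : Type*} [AddCommMonoid M] (f : ℕ → ℕ → M) (a : ℕ) :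
    ∑ i ∈ Ico 1 a, f (a - i) i = ∑ i ∈ Ico 1 a, f i (a - i) := by
  refine sum_nbij' (fun i => a - i) (fun i => a - i) ?_ ?_ ?_ ?_ ?_ <;>
    intro i hi <;> simp only [mem_Ico] at hi ⊢ <;> grind

lemma jucysMurphy_C_splitCycle (a : ℕ) :
    jucysMurphy K (𝐂 (splitCycle K a)) =
      ∑ i ∈ Ico 1 a, (2 * (a - i)) • (𝐂 (X i) * 𝐲 ^ (a - i)) := by
  have join_pair (i j : ℕ) : jucysMurphy K (𝐂 (X i * X j)) =
      j • (𝐂 (X i) * 𝐲 ^ j) + i • (𝐂 (X j) * 𝐲 ^ i) := by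
    have hJ := jucysMurphy_C_mul_X_pow (X i * (X j * 1) : PowerSums K) 0
    rw [X_pow_succ_mul_mark_X_mul, X_pow_succ_mul_mark_X_mul, Derivation.map_one_eq_zero,
      zero_add, Ico_self, sum_empty] at hJ
    simp only [pow_zero, mul_one, mul_zero, zero_add, add_zero, map_one, one_mul,
      mul_smul_comm] at hJ
    exact hJ
  rw [splitCycle, map_sum, map_sum]
  simp only [join_pair, sum_add_distrib]
  rw [← sum_Ico_reflect_sub fun i j => i • (𝐂 (X j) * 𝐲 ^ i), ← sum_add_distrib]
  exact sum_congr rfl fun i _ => by rw [mul_smul, two_smul]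

lemma end_lie_nsmul {M : Type*} [AddCommGroup M] [Module K M] (A B : Module.End K M) (n : ℕ) :
    ⁅A, n • B⁆ = n • ⁅A, B⁆ := by
  rw [Ring.lie_def, Ring.lie_def, mul_smul_comm, smul_mul_assoc, smul_sub]

lemma jucysMurphy_C_splitCycle_add (a : ℕ) :
    jucysMurphy K (𝐂 (splitCycle K a)) + 2 • jucysMurphy K (𝐲 ^ a) =
      markedCutAndJoin K (𝐲 ^ a) := by
  have hJ := jucysMurphy_C_mul_X_pow (K := K) 1 a
  have hT := markedCutAndJoin_C_mul_X_pow (K := K) 1 a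
  rw [map_one, one_mul, Derivation.map_one_eq_zero, mul_zero, zero_add] at hJ
  rw [map_one, one_mul, Derivation.map_one_eq_zero, mul_zero, smul_zero, add_zero, cutAndJoin_one,
    map_zero, zero_mul, zero_add] at hT
  have h_last : ∑ i ∈ Ico 1 a, (2 * (a - i)) • (𝐂 (X i) * 𝐲 ^ (a - i)) =
      ∑ i ∈ Ico 1 (a + 1), (2 * (a - i)) • (𝐂 (X i) * 𝐲 ^ (a - i)) := by
    cases a with
    | zero => rfl
    | succ a =>
      rw [sum_Ico_succ_top (Nat.le_add_left 1 a), Nat.sub_self, mul_zero, zero_smul, add_zero]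
  rw [jucysMurphy_C_splitCycle, h_last, hJ, hT, smul_sum, ← sum_add_distrib]
  refine sum_congr rfl fun i hi => ?_
  rw [mul_one, ← add_smul, Nat.succ_sub (Nat.lt_succ_iff.mp (mem_Ico.mp hi).2), Nat.mul_succ]

lemma lie_jucysMurphy_attachCycle (a : ℕ) :
    ⁅jucysMurphy K, attachCycle K a⁆ = ⁅markedCutAndJoin K, μ (𝐲 ^ a)⁆ := by
  have h_comm (F G : MarkedPowerSums K) : ⁅μ F, μ G⁆ = 0 :=
    Commute.lie_eq ((Commute.all F G).map μ)
  refine end_ext_of_lie (fun b => ?_) ?_ ?_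
  · rw [ring_lie_lie, ring_lie_lie, lie_attachCycle_lmul_C, lie_jucysMurphy_lmul_C, h_comm,
      lie_markedCutAndJoin_lmul_C, end_lie_nsmul, end_lie_nsmul, end_lie_nsmul,
      lie_jucysMurphy_lmul_C, lie_attachCycle_lmul_X_pow, ← ring_lie_skew (μ (𝐲 ^ a)),
      lie_attachCycle_lmul_X_pow, add_comm b a, Ring.lie_def, mul_zero, zero_mul]
    module
  · have hW := lie_attachCycle_lmul_X_pow (K := K) a 1
    rw [pow_one, mul_one, pow_succ', map_mul] at hW
    rw [ring_lie_lie, ring_lie_lie, hW, h_comm, lie_jucysMurphy_lmul_X, lie_markedCutAndJoin_lmul_X,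
      Ring.lie_def _ 0, mul_zero, zero_mul, sub_self, zero_sub]
    exact lie_mul_sub_lie_eq lie_jucysMurphy_lmul_X (renewMark_mul_attachCycle a)
      ((Commute.all _ _).map μ)
  · rw [Ring.lie_def, Ring.lie_def, LinearMap.sub_apply, LinearMap.sub_apply, Module.End.mul_apply,
      Module.End.mul_apply, Module.End.mul_apply, Module.End.mul_apply, jucysMurphy_one,
      markedCutAndJoin_one, map_zero, map_zero, sub_zero, sub_zero, lmul_apply, mul_one,
      attachCycle_one, map_add, map_nsmul, jucysMurphy_C_splitCycle_add]

lemma forgetMark_comp_markedCutAndJoin :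
    forgetMark K ∘ₗ markedCutAndJoin K = cutAndJoin K ∘ₗ forgetMark K := by
  refine linearMap_ext_C_mul_X_pow fun g m => ?_
  have h_split : ∑ i ∈ Ico 1 (m + 1), (2 * (m + 1 - i)) • (X (m - i + 1) * (X i * g)) =
      (m + 1) • (splitCycle K (m + 1) * g) := by
    have h_refl := sum_Ico_reflect_sub (fun i j => i • (X i * X j : PowerSums K)) (m + 1)
    calc ∑ i ∈ Ico 1 (m + 1), (2 * (m + 1 - i)) • (X (m - i + 1) * (X i * g))
      _ = (∑ i ∈ Ico 1 (m + 1), (m + 1 - i) • (X (m + 1 - i) * X i) +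
            ∑ i ∈ Ico 1 (m + 1), (m + 1 - i) • (X (m + 1 - i) * X i)) * g := by
        rw [← sum_add_distrib, sum_mul]
        refine sum_congr rfl fun i hi => ?_
        rw [Nat.succ_sub (Nat.lt_succ_iff.mp (mem_Ico.mp hi).2)]
        simp only [nsmul_eq_mul]
        push_cast
        ring
      _ = (∑ i ∈ Ico 1 (m + 1), (m + 1) • (X i * X (m + 1 - i))) * g := by
        nth_rw 1 [h_refl]
        rw [← sum_add_distrib]
        congr 1
        refine sum_congr rfl fun i hi => ?_
        rw [mul_comm (X (m + 1 - i)), ← add_smul, Nat.add_sub_cancel' (mem_Ico.mp hi).2.le]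
      _ = (m + 1) • (splitCycle K (m + 1) * g) := by
        rw [← smul_sum, splitCycle, smul_mul_assoc]
  rw [LinearMap.comp_apply, LinearMap.comp_apply, forgetMark_C_mul_X_pow,
    markedCutAndJoin_C_mul_X_pow, cutAndJoin_X_mul]
  simp only [map_add, map_sum, map_nsmul, forgetMark_C_mul_X_pow, forgetMark_X_pow_mul_mark,
    h_split]
  rw [mul_comm 2, mul_smul, smul_add, add_assoc]

lemma markedCutAndJoin_C (g : PowerSums K) :
    markedCutAndJoin K (𝐂 g) = 𝐂 (cutAndJoin K g) + 2 • jucysMurphy K (𝐂 g) := by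
  have hJ := jucysMurphy_C_mul_X_pow g 0
  have hT := markedCutAndJoin_C_mul_X_pow g 0
  rw [pow_zero, mul_one, zero_add, Ico_self, sum_empty, add_zero] at hJ hT
  rw [hT, hJ, mul_one, mul_one]

lemma markedCutAndJoin_mul_renewMark :
    markedCutAndJoin K * renewMark K =
      renewMark K * markedCutAndJoin K + 2 • (jucysMurphy K * renewMark K) := by
  have renewMark_apply (G : MarkedPowerSums K) : renewMark K G = 𝐂 (forgetMark K G) := rfl
  refine LinearMap.ext fun G => ?_
  have hG := LinearMap.congr_fun (forgetMark_comp_markedCutAndJoin (K := K)) G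
  rw [LinearMap.comp_apply, LinearMap.comp_apply] at hG
  rw [LinearMap.add_apply, LinearMap.smul_apply, Module.End.mul_apply, Module.End.mul_apply,
    Module.End.mul_apply, renewMark_apply, renewMark_apply, markedCutAndJoin_C, hG]

lemma lie_jucysMurphy_markedCutAndJoin : ⁅jucysMurphy K, markedCutAndJoin K⁆ = 0 := by
  refine end_ext_of_lie (fun a => ?_) ?_ ?_
  · rw [ring_lie_lie, lie_markedCutAndJoin_lmul_C, lie_jucysMurphy_lmul_C, end_lie_nsmul,
      end_lie_nsmul, lie_jucysMurphy_attachCycle, sub_self, Ring.lie_def, zero_mul, mul_zero,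
      sub_self]
  · rw [ring_lie_lie, lie_markedCutAndJoin_lmul_X, lie_jucysMurphy_lmul_X,
      lie_add_eq_lie lie_jucysMurphy_lmul_X markedCutAndJoin_mul_renewMark, sub_self,
      Ring.lie_def, zero_mul, mul_zero, sub_self]
  · rw [Ring.lie_def, LinearMap.sub_apply, Module.End.mul_apply, Module.End.mul_apply,
      jucysMurphy_one, markedCutAndJoin_one, map_zero, map_zero, sub_self, LinearMap.zero_apply]

end Commutators

section SymmetricPolynomials

variable {K : Type*} [CommRing K]

section PowerSumDerivations

variable {σ : Type*}

/-- The derivation `x_i ∂/∂x_i`. -/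
def eulerDerivation (i : σ) : Derivation K (MvPolynomial σ K) (MvPolynomial σ K) :=
  X (R := K) i • pderiv i

variable (σ K) in
/-- The derivation `∑ i, x_i ^ (a + 1) ∂/∂x_i`. -/
def powerDerivation (a : ℕ) : Derivation K (MvPolynomial σ K) (MvPolynomial σ K) :=
  mkDerivation K fun i => X i ^ (a + 1)

lemma eulerDerivation_monomial (i : σ) (u : σ →₀ ℕ) (c : K) :
    eulerDerivation i (monomial u c) = u i • monomial u c :=
  X_mul_pderiv_monomial

lemma eulerDerivation_X [DecidableEq σ] (i j : σ) :
    eulerDerivation i (X j : MvPolynomial σ K) = if j = i then X i else 0 := by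
  rw [eulerDerivation, Derivation.smul_apply, pderiv_X, Pi.single_apply, smul_eq_mul, mul_ite,
    mul_one, mul_zero]

lemma eulerDerivation_X_pow_self (i : σ) (a : ℕ) :
    eulerDerivation i (X i ^ a : MvPolynomial σ K) = a • X i ^ a := by
  rw [X_pow_eq_monomial, eulerDerivation_monomial, Finsupp.single_eq_same]

variable [Fintype σ]

variable (σ K) in
/-- The evaluation of formal power sums at the variables indexed by `σ`. -/
def evalPowerSums : PowerSums K →ₐ[K] MvPolynomial σ K := aeval (psum σ K)

lemma evalPowerSums_X (a : ℕ) : evalPowerSums K σ (X a) = psum σ K a := aeval_X _ _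

lemma rename_evalPowerSums (e : Equiv.Perm σ) (g : PowerSums K) :
    rename e (evalPowerSums K σ g) = evalPowerSums K σ g := by
  suffices h : (rename e).comp (evalPowerSums K σ) = evalPowerSums K σ from DFunLike.congr_fun h g
  refine algHom_ext fun a => ?_
  rw [AlgHom.comp_apply, evalPowerSums_X, rename_psum]

lemma eulerDerivation_psum (i : σ) (a : ℕ) :
    eulerDerivation i (psum σ K a) = a • X i ^ a := by
  classical
  rw [psum, map_sum, sum_eq_single i, eulerDerivation_X_pow_self]
  · intro j _ hj
    rw [Derivation.leibniz_pow, eulerDerivation_X, if_neg hj, smul_zero, smul_zero]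
  · exact fun hi => absurd (mem_univ i) hi

lemma derivation_sum_apply {R ι : Type*} [CommRing R] [Algebra K R] (s : Finset ι)
    (d : ι → Derivation K R R) (x : R) : (∑ i ∈ s, d i) x = ∑ i ∈ s, d i x :=
  (congr_fun (map_sum (Derivation.coeFnAddMonoidHom (R := K) (A := R) (M := R)) d s) x).trans
    (Finset.sum_apply _ _ _)

lemma powerDerivation_eq_sum (a : ℕ) (F : MvPolynomial σ K) :
    powerDerivation K σ a F = ∑ i, X i ^ a * eulerDerivation i F := by
  classical
  suffices h : powerDerivation K σ a = ∑ i, X (R := K) i ^ a • eulerDerivation i by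
    rw [h, derivation_sum_apply]
    rfl
  refine derivation_ext fun i => ?_
  simp [derivation_sum_apply, powerDerivation, mkDerivation_X, eulerDerivation_X, pow_succ]

lemma powerDerivation_psum (a b : ℕ) :
    powerDerivation K σ a (psum σ K b) = b • psum σ K (a + b) := by
  simp only [powerDerivation_eq_sum, eulerDerivation_psum]
  simp only [psum, mul_smul_comm, ← pow_add, ← smul_sum]

lemma powerDerivation_evalPowerSums (a : ℕ) (g : PowerSums K) :
    powerDerivation K σ a (evalPowerSums K σ g) = evalPowerSums K σ (joinCycle K a g) := by
  suffices h : (powerDerivation K σ a : MvPolynomial σ K →ₗ[K] MvPolynomial σ K) ∘ₗ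
      (evalPowerSums K σ).toLinearMap = (evalPowerSums K σ).toLinearMap ∘ₗ joinCycle K a
    from LinearMap.congr_fun h g
  refine linearMap_ext_X_mul (by simp) fun b g h => ?_
  simp only [LinearMap.comp_apply, AlgHom.toLinearMap_apply, Derivation.coeFn_coe] at h ⊢
  rw [joinCycle_X_mul, map_mul, Derivation.leibniz, h, evalPowerSums_X, powerDerivation_psum,
    map_add, map_nsmul, map_mul, map_mul, evalPowerSums_X, evalPowerSums_X]
  simp only [smul_eq_mul, nsmul_eq_mul]
  ring

end PowerSumDerivations

lemma derivation_prod_eq_mul_sum {R ι : Type*} [CommRing R] [Algebra K R]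
    (d : Derivation K R R) (s : Finset ι) (b c : ι → R) (h : ∀ i ∈ s, d (b i) = b i * c i) :
    d (∏ i ∈ s, b i) = (∏ i ∈ s, b i) * ∑ i ∈ s, c i := by
  classical
  induction s using Finset.induction_on with
  | empty => simp
  | insert a s ha ih =>
    rw [prod_insert ha, sum_insert ha, Derivation.leibniz, h a (mem_insert_self _ _),
      ih fun i hi => h i (mem_insert_of_mem hi)]
    simp only [smul_eq_mul]
    ring

variable {N : ℕ}

variable (K N) in
/-- The alternating polynomial `∑ w, sgn w • x ^ (w δ)` with `δ = (N - 1, …, 1, 0)`. -/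
def alternant : MvPolynomial (Fin N) K :=
  (Matrix.of fun i j : Fin N => X (R := K) j ^ (N - 1 - (i : ℕ))).det

variable (N) in
/-- The exponent vector `δ = (N - 1, …, 1, 0)`. -/
def staircase : Fin N →₀ ℕ := Finsupp.equivFunOnFinite.symm fun i => N - 1 - i

lemma prod_X_pow_eq_monomial_univ {σ : Type*} [Fintype σ] (e : σ → ℕ) :
    ∏ i, (X i : MvPolynomial σ K) ^ e i = monomial (Finsupp.equivFunOnFinite.symm e) 1 := by
  rw [monomial_eq, C_1, one_mul, Finsupp.prod_fintype _ _ fun i => pow_zero _]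
  rfl

lemma alternant_eq_sum_monomial :
    alternant K N = ∑ w : Equiv.Perm (Fin N),
      monomial ((staircase N).mapDomain w.symm) ((Equiv.Perm.sign w : ℤ) : K) := by
  rw [alternant, Matrix.det_apply']
  refine sum_congr rfl fun w _ => ?_
  simp only [Matrix.of_apply]
  rw [prod_X_pow_eq_monomial_univ fun i => N - 1 - (w i : ℕ), ← mul_one ((_ : ℤ) : K),
    ← C_mul_monomial, map_intCast]
  suffices h : Finsupp.equivFunOnFinite.symm (fun i => N - 1 - (w i : ℕ)) =
      (staircase N).mapDomain w.symm by rw [h]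
  ext i
  rw [Finsupp.mapDomain_equiv_apply]
  rfl

lemma rename_alternant (e : Equiv.Perm (Fin N)) :
    rename e (alternant K N) = (Equiv.Perm.sign e : ℤ) * alternant K N := by
  rw [alternant, AlgHom.map_det, ← Matrix.det_permute']
  congr 1
  ext i j
  simp

lemma alternant_eq_det_vandermonde :
    alternant K N = (Equiv.Perm.sign (Fin.revPerm (n := N)) : ℤ) *
      ∏ i : Fin N, ∏ j ∈ Ioi i, (X j - X i) := by
  rw [← Matrix.det_vandermonde, ← Matrix.det_transpose, ← Matrix.det_permute, alternant]
  congr 1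
  ext i j
  simp only [Matrix.of_apply, Matrix.submatrix_apply, Matrix.transpose_apply,
    Matrix.vandermonde_apply, Fin.revPerm_apply, Fin.val_rev, id]
  congr 2
  lia

lemma two_smul_sum_sum_Ioi {ι M : Type*} [LinearOrder ι] [Fintype ι] [LocallyFiniteOrderTop ι]
    [LocallyFiniteOrderBot ι] [AddCommGroup M] (f : ι → ι → M) (hf : ∀ i j, f i j = f j i) :
    2 • ∑ i, ∑ j ∈ Ioi i, f i j = ∑ i, ∑ j, f i j - ∑ i, f i i := by
  have h_split (i : ι) : ∑ j ∈ {i}ᶜ, f j i = ∑ j, f i j - f i i := by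
    rw [eq_sub_iff_add_eq, ← sum_compl_add_sum {i}, sum_singleton]
    simp only [hf _ i]
  rw [← sum_sub_distrib, ← sum_congr rfl fun i _ => h_split i,
    ← sum_sum_Ioi_add_eq_sum_sum_off_diag]
  simp only [smul_sum, two_smul, hf _ _]

lemma powerDerivation_alternant (a : ℕ) :
    powerDerivation K (Fin N) a (alternant K N) = alternant K N *
      ∑ i : Fin N, ∑ j ∈ Ioi i, ∑ t ∈ range (a + 1), X j ^ t * X i ^ (a - t) := by
  have h_sub (i j : Fin N) : powerDerivation K (Fin N) a (X j - X i) =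
      (X j - X i) * ∑ t ∈ range (a + 1), X j ^ t * X i ^ (a - t) := by
    rw [map_sub, powerDerivation, mkDerivation_X, mkDerivation_X, mul_comm,
      ← (Commute.all (X j) (X i)).geom_sum₂_mul (a + 1)]
    rfl
  rw [alternant_eq_det_vandermonde, Derivation.leibniz, Derivation.map_intCast, smul_zero, add_zero,
    derivation_prod_eq_mul_sum _ _ _ _ fun i _ =>
      derivation_prod_eq_mul_sum _ _ _ _ fun j _ => h_sub i j, smul_eq_mul, mul_assoc]

lemma two_smul_powerDerivation_alternant (a : ℕ) :
    2 • powerDerivation K (Fin N) a (alternant K N) =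
      (∑ t ∈ range (a + 1), psum (Fin N) K t * psum (Fin N) K (a - t) -
        (a + 1) • psum (Fin N) K a) * alternant K N := by
  have h_symm (i j : Fin N) :
      ∑ t ∈ range (a + 1), (X j : MvPolynomial (Fin N) K) ^ t * X i ^ (a - t) =
        ∑ t ∈ range (a + 1), X i ^ t * X j ^ (a - t) := by
    rw [← sum_range_reflect]
    refine sum_congr rfl fun t ht => ?_
    have ht' : t ≤ a := Nat.lt_succ_iff.mp (mem_range.mp ht)
    rw [Nat.add_sub_cancel, Nat.sub_sub_self ht', mul_comm]
  have h_diag (i : Fin N) :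
      ∑ t ∈ range (a + 1), (X i : MvPolynomial (Fin N) K) ^ t * X i ^ (a - t) =
        (a + 1) • X i ^ a := by
    rw [sum_congr rfl fun t ht => by
      rw [← pow_add, Nat.add_sub_cancel' (Nat.lt_succ_iff.mp (mem_range.mp ht))], sum_const,
      card_range]
  have h_all : ∑ i : Fin N, ∑ j : Fin N, ∑ t ∈ range (a + 1),
      (X j : MvPolynomial (Fin N) K) ^ t * X i ^ (a - t) =
      ∑ t ∈ range (a + 1), psum (Fin N) K t * psum (Fin N) K (a - t) := by
    simp only [psum, sum_mul_sum]
    rw [sum_comm, sum_comm (s := range (a + 1))]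
    exact sum_congr rfl fun i _ => sum_comm
  rw [powerDerivation_alternant, mul_comm, ← smul_mul_assoc, two_smul_sum_sum_Ioi _ h_symm, h_all]
  simp only [h_diag, ← smul_sum, psum]

lemma nsmul_two_smul_powerDerivation_alternant (a : ℕ) :
    a • 2 • powerDerivation K (Fin N) a (alternant K N) =
      a • ((evalPowerSums K (Fin N) (splitCycle K a) +
        (2 * N - (a + 1) : ℤ) • psum (Fin N) K a) * alternant K N) := by
  cases a with
  | zero => rw [zero_smul, zero_smul]
  | succ a =>
    rw [two_smul_powerDerivation_alternant, sum_range_succ, sum_range_eq_add_Ico _ a.succ_pos,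
      Nat.sub_zero, Nat.sub_self, psum_zero, Fintype.card_fin, splitCycle, map_sum]
    simp only [map_mul, evalPowerSums_X, nsmul_eq_mul, zsmul_eq_mul]
    push_cast
    ring

variable (K N) in
/-- The operator `∑ i, (θ i ^ 2 - (2 * N - 1) θ i)` with `θ i = x_i ∂/∂x_i`.  Up to a constant, it
corresponds to the cut-and-join operator when acting on alternating polynomials. -/
def casimir : Module.End K (MvPolynomial (Fin N) K) :=
  ∑ i, ((eulerDerivation i).toLinearMap ∘ₗ (eulerDerivation i).toLinearMap -
    (2 * N - 1 : ℤ) • (eulerDerivation i).toLinearMap)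

/-- The eigenvalue of `casimir` on the monomial with exponent vector `u`. -/
def casimirEigenvalue (u : Fin N →₀ ℕ) : ℤ := ∑ i, (u i : ℤ) * (u i - (2 * N - 1))

lemma casimir_apply (F : MvPolynomial (Fin N) K) :
    casimir K N F =
      ∑ i, (eulerDerivation i (eulerDerivation i F) - (2 * N - 1 : ℤ) • eulerDerivation i F) := by
  rw [casimir, LinearMap.sum_apply]
  rfl

lemma casimir_monomial (u : Fin N →₀ ℕ) (c : K) :
    casimir K N (monomial u c) = casimirEigenvalue u • monomial u c := by
  rw [casimir_apply, casimirEigenvalue, sum_smul]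
  refine sum_congr rfl fun i _ => ?_
  rw [eulerDerivation_monomial, map_nsmul, eulerDerivation_monomial, mul_sub, sub_smul]
  simp only [nsmul_eq_mul, zsmul_eq_mul]
  push_cast
  ring

lemma coeff_casimir (u : Fin N →₀ ℕ) (F : MvPolynomial (Fin N) K) :
    coeff u (casimir K N F) = casimirEigenvalue u • coeff u F := by
  induction F using MvPolynomial.induction_on' with
  | monomial v c =>
    rw [casimir_monomial, coeff_smul, coeff_monomial]
    split_ifs with h
    · rw [h]
    · rw [smul_zero, smul_zero]
  | add F G hF hG => rw [map_add, coeff_add, coeff_add, hF, hG, smul_add]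

lemma casimirEigenvalue_mapDomain (e : Equiv.Perm (Fin N)) (u : Fin N →₀ ℕ) :
    casimirEigenvalue (u.mapDomain e) = casimirEigenvalue u := by
  rw [casimirEigenvalue, casimirEigenvalue, ← Equiv.sum_comp e]
  simp only [Finsupp.mapDomain_equiv_apply, Equiv.symm_apply_apply]

lemma casimir_alternant :
    casimir K N (alternant K N) = casimirEigenvalue (staircase N) • alternant K N := by
  simp only [alternant_eq_sum_monomial, map_sum, casimir_monomial, casimirEigenvalue_mapDomain,
    smul_sum]

lemma casimir_psum_mul (a : ℕ) (F : MvPolynomial (Fin N) K) :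
    casimir K N (psum (Fin N) K a * F) =
      psum (Fin N) K a * casimir K N F + (2 * a) • powerDerivation K (Fin N) a F +
        (a ^ 2 - (2 * N - 1) * a : ℤ) • (psum (Fin N) K a * F) := by
  have h_psum (i : Fin N) (G : MvPolynomial (Fin N) K) :
      eulerDerivation i (psum (Fin N) K a * G) =
        psum (Fin N) K a * eulerDerivation i G + a • (X i ^ a * G) := by
    rw [Derivation.leibniz, eulerDerivation_psum, smul_eq_mul, smul_eq_mul, mul_smul_comm,
      mul_comm G]
  have h_pow (i : Fin N) (G : MvPolynomial (Fin N) K) : eulerDerivation i (X i ^ a * G) =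
      X i ^ a * eulerDerivation i G + a • (X i ^ a * G) := by
    rw [Derivation.leibniz, eulerDerivation_X_pow_self, smul_eq_mul, smul_eq_mul, mul_smul_comm,
      mul_comm G]
  have h_psum_mul : psum (Fin N) K a * F = ∑ i, X i ^ a * F := sum_mul _ _ _
  simp only [casimir_apply, h_psum, map_add, map_nsmul, h_pow]
  rw [powerDerivation_eq_sum, h_psum_mul, mul_sum, smul_sum,
    smul_sum, ← sum_add_distrib, ← sum_add_distrib]
  refine sum_congr rfl fun i _ => ?_
  simp only [nsmul_eq_mul, zsmul_eq_mul]
  push_cast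
  ring

lemma casimir_evalPowerSums_mul_alternant (g : PowerSums K) :
    casimir K N (evalPowerSums K (Fin N) g * alternant K N) =
      evalPowerSums K (Fin N) (cutAndJoin K g) * alternant K N +
        casimirEigenvalue (staircase N) • (evalPowerSums K (Fin N) g * alternant K N) := by
  induction g using MvPolynomial.induction_on with
  | C c =>
    rw [C_eq_smul_one]
    simp only [map_smul, map_one, map_zero, smul_zero, smul_mul_assoc, one_mul, zero_mul, zero_add,
      cutAndJoin_one, casimir_alternant, smul_comm c]
  | add f g hf hg =>
    simp only [map_add, add_mul, hf, hg, smul_add]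
    abel
  | mul_X g a h =>
    have h_alt := nsmul_two_smul_powerDerivation_alternant (K := K) (N := N) a
    rw [mul_comm g, map_mul (evalPowerSums K _), evalPowerSums_X, mul_assoc, casimir_psum_mul, h,
      Derivation.leibniz, powerDerivation_evalPowerSums, cutAndJoin_X_mul, map_add, map_nsmul,
      map_add, map_nsmul, map_mul, map_mul, evalPowerSums_X]
    simp only [nsmul_eq_mul, zsmul_eq_mul, smul_eq_mul] at h_alt ⊢
    push_cast at h_alt ⊢
    linear_combination evalPowerSums K (Fin N) g * h_alt

/-- The linear functional which sends the power sum monomial of cycle type `k` to the coefficient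
of `x ^ u` in `p_k` times the alternant, which is the value at `k` of a character if `u` is the sum
of a partition and the staircase. -/
def frobeniusCoeff (u : Fin N →₀ ℕ) : PowerSums K →ₗ[K] K :=
  lcoeff K u ∘ₗ LinearMap.mulRight K (alternant K N) ∘ₗ (evalPowerSums K (Fin N)).toLinearMap

lemma frobeniusCoeff_apply (u : Fin N →₀ ℕ) (g : PowerSums K) :
    frobeniusCoeff u g = coeff u (evalPowerSums K (Fin N) g * alternant K N) := rfl

lemma frobeniusCoeff_cutAndJoin (u : Fin N →₀ ℕ) (g : PowerSums K) :
    frobeniusCoeff u (cutAndJoin K g) =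
      (casimirEigenvalue u - casimirEigenvalue (staircase N)) • frobeniusCoeff u g := by
  rw [frobeniusCoeff_apply, frobeniusCoeff_apply, sub_smul, ← coeff_casimir,
    casimir_evalPowerSums_mul_alternant, coeff_add, coeff_smul, add_sub_cancel_right]

lemma frobeniusCoeff_X_one_mul (u : Fin N →₀ ℕ) (g : PowerSums K) :
    frobeniusCoeff u (X 1 * g) =
      ∑ i ∈ u.support, frobeniusCoeff (u - Finsupp.single i 1) g := by
  rw [frobeniusCoeff_apply, map_mul, evalPowerSums_X, psum, mul_assoc, sum_mul, coeff_sum]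
  simp only [pow_one, coeff_X_mul', sum_ite_mem, univ_inter, frobeniusCoeff_apply]

lemma casimirEigenvalue_sub_single {u : Fin N →₀ ℕ} {i : Fin N} (hi : i ∈ u.support) :
    casimirEigenvalue u - casimirEigenvalue (u - Finsupp.single i 1) = 2 * ((u i : ℤ) - N) := by
  have hi' : 1 ≤ u i := Nat.one_le_iff_ne_zero.mpr (Finsupp.mem_support_iff.mp hi)
  rw [casimirEigenvalue, casimirEigenvalue, ← sum_sub_distrib, sum_eq_single i]
  · simp [hi']
    ring
  · intro j _ hj
    simp [hj.symm]
  · exact fun h => absurd (mem_univ i) h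

lemma markedCutAndJoin_jucysMurphy_pow_C (q : ℕ) (g : PowerSums K) :
    markedCutAndJoin K ((jucysMurphy K ^ q) (Polynomial.C g)) =
      (jucysMurphy K ^ q) (Polynomial.C (cutAndJoin K g)) +
        2 • (jucysMurphy K ^ (q + 1)) (Polynomial.C g) := by
  have h_comm : Commute (markedCutAndJoin K) (jucysMurphy K) :=
    (sub_eq_zero.mp lie_jucysMurphy_markedCutAndJoin).symm
  have hJ := LinearMap.congr_fun (h_comm.pow_right q).eq (Polynomial.C g)
  rw [Module.End.mul_apply, Module.End.mul_apply, markedCutAndJoin_C, map_add, map_nsmul] at hJ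
  rw [hJ, pow_succ, Module.End.mul_apply]

lemma frobeniusCoeff_forgetMark_jucysMurphy_pow [NoZeroDivisors K] [CharZero K]
    (u : Fin N →₀ ℕ) (q : ℕ) (g : PowerSums K) :
    frobeniusCoeff u (forgetMark K ((jucysMurphy K ^ q) (Polynomial.C g))) =
      ∑ i ∈ u.support, ((u i : K) - N) ^ q * frobeniusCoeff (u - Finsupp.single i 1) g := by
  induction q generalizing g with
  | zero =>
    simp only [pow_zero, Module.End.one_apply, forgetMark_C, frobeniusCoeff_X_one_mul, one_mul]
  | succ q ih =>
    -- `φ_u` applied to `Φ (T (J ^ q g)) = Δ (Φ (J ^ q g))`, where `Φ` forgets the mark: since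
    -- `T (J ^ q g) = J ^ q (Δ g) + 2 J ^ (q + 1) g`, only a difference of eigenvalues remains.
    have h := congrArg (frobeniusCoeff u) (LinearMap.congr_fun forgetMark_comp_markedCutAndJoin
      ((jucysMurphy K ^ q) (Polynomial.C g)))
    rw [LinearMap.comp_apply, LinearMap.comp_apply, markedCutAndJoin_jucysMurphy_pow_C,
      frobeniusCoeff_cutAndJoin, map_add, map_add, map_nsmul, map_nsmul, ih, ih, nsmul_eq_mul,
      ← eq_sub_iff_add_eq', smul_sum, ← sum_sub_distrib] at h
    refine mul_left_cancel₀ two_ne_zero (h.trans ?_)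
    rw [mul_sum]
    refine sum_congr rfl fun i hi => ?_
    have h_eig := congrArg (Int.cast : ℤ → K) (casimirEigenvalue_sub_single hi)
    rw [frobeniusCoeff_cutAndJoin, zsmul_eq_mul, zsmul_eq_mul]
    push_cast at h_eig ⊢
    linear_combination ((u i : K) - N) ^ q * frobeniusCoeff (u - Finsupp.single i 1) g * h_eig

end SymmetricPolynomials

section Positivity

variable {K : Type*} [CommRing K] [LinearOrder K] [IsStrictOrderedRing K] {N : ℕ}

lemma frobeniusCoeff_eq_zero_of_not_injective {u : Fin N →₀ ℕ} (hu : ¬ Function.Injective u)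
    (g : PowerSums K) : frobeniusCoeff u g = 0 := by
  obtain ⟨i, j, h, hij⟩ := Function.not_injective_iff.mp hu
  have h_map : u.mapDomain (Equiv.swap i j) = u := by
    ext k
    rw [Finsupp.mapDomain_equiv_apply, Equiv.symm_swap, Equiv.swap_apply_def]
    split_ifs <;> simp_all
  have h_coeff := coeff_rename_mapDomain (Equiv.swap i j) (Equiv.swap i j).injective
    (evalPowerSums K (Fin N) g * alternant K N) u
  rw [h_map, map_mul, rename_evalPowerSums, rename_alternant, Equiv.Perm.sign_swap hij,
    Units.val_neg, Units.val_one, Int.cast_neg, Int.cast_one, neg_one_mul, mul_neg,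
    coeff_neg] at h_coeff
  exact neg_eq_self.mp h_coeff

lemma frobeniusCoeff_one_nonneg {u : Fin N →₀ ℕ} (hu : StrictAnti u) :
    0 ≤ frobeniusCoeff u (1 : PowerSums K) := by
  rw [frobeniusCoeff_apply, map_one, one_mul, alternant_eq_sum_monomial, coeff_sum]
  refine sum_nonneg fun w _ => ?_
  rw [coeff_monomial]
  split_ifs with h
  · have hw : StrictMono w := by
      intro i j hij
      have h_lt := hu hij
      simp only [← h, Finsupp.mapDomain_equiv_apply, Equiv.symm_symm, staircase,
        Finsupp.equivFunOnFinite_symm_apply_apply] at h_lt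
      rw [Fin.lt_def]
      lia
    have hw_one : w = 1 := Equiv.coe_fn_injective <|
      (hw.range_inj strictMono_id).mp (by rw [w.range_eq_univ, Set.range_id])
    simp [hw_one]
  · exact le_rfl

lemma strictAnti_sub_single {u : Fin N →₀ ℕ} (hu : StrictAnti u) (i : Fin N)
    (h : Function.Injective (u - Finsupp.single i 1 : Fin N →₀ ℕ)) :
    StrictAnti (u - Finsupp.single i 1 : Fin N →₀ ℕ) := by
  refine Antitone.strictAnti_of_injective (fun j k hjk => ?_) h
  rcases hjk.eq_or_lt with rfl | hjk
  · exact le_rfl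
  have h_lt := hu hjk
  simp only [Finsupp.tsub_apply, Finsupp.single_apply]
  split_ifs <;> lia

lemma frobeniusCoeff_X_one_pow_nonneg {u : Fin N →₀ ℕ} (hu : StrictAnti u) (t : ℕ) :
    0 ≤ frobeniusCoeff u (X 1 ^ t : PowerSums K) := by
  induction t generalizing u with
  | zero => exact frobeniusCoeff_one_nonneg hu
  | succ t ih =>
    rw [pow_succ', frobeniusCoeff_X_one_mul]
    refine sum_nonneg fun i _ => ?_
    by_cases h : Function.Injective (u - Finsupp.single i 1 : Fin N →₀ ℕ)
    · exact ih (strictAnti_sub_single hu i h)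
    · exact (frobeniusCoeff_eq_zero_of_not_injective h _).ge

/-- The exponent vector `u` is the sum of the staircase and of a partition with at most `R` rows and
at most `R` columns. -/
structure IsBalanced (R : K) (u : Fin N → ℕ) : Prop where
  strictAnti : StrictAnti u
  row_le (i : Fin N) (hi : N - 1 - i < u i) : (i : K) + 1 ≤ R
  column_le (i : Fin N) : (u i : K) ≤ (N - 1 - i : ℕ) + R

lemma IsBalanced.sub_single {R : K} {u : Fin N →₀ ℕ} (hu : IsBalanced R u) (i : Fin N)
    (h : Function.Injective (u - Finsupp.single i 1 : Fin N →₀ ℕ)) :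
    IsBalanced R (u - Finsupp.single i 1 : Fin N →₀ ℕ) where
  strictAnti := strictAnti_sub_single hu.strictAnti i h
  row_le j hj := hu.row_le j (hj.trans_le (Nat.sub_le _ _))
  column_le j := (Nat.cast_le.mpr (Nat.sub_le _ _)).trans (hu.column_le j)

lemma sub_one_sub_le_of_strictAnti {u : Fin N → ℕ} (hu : StrictAnti u) (i : Fin N) :
    N - 1 - i ≤ u i := by
  suffices h : ∀ d, ∀ i : Fin N, N - 1 - i = d → d ≤ u i from h _ i rfl
  intro d
  induction d with
  | zero => exact fun _ _ => Nat.zero_le _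
  | succ d ih =>
    intro i hi
    have h_lt : i < ⟨i + 1, by lia⟩ := Fin.lt_def.mpr (Nat.lt_succ_self _)
    exact (ih ⟨i + 1, by lia⟩ (by simp only; lia)).trans_lt (hu h_lt)

lemma IsBalanced.abs_sub_le {R : K} {u : Fin N →₀ ℕ} (hu : IsBalanced R u) {i : Fin N}
    (hi : i ∈ u.support) (h : Function.Injective (u - Finsupp.single i 1 : Fin N →₀ ℕ)) :
    |(u i : K) - N| ≤ R := by
  have h_ge := sub_one_sub_le_of_strictAnti (strictAnti_sub_single hu.strictAnti i h) i
  rw [Finsupp.tsub_apply, Finsupp.single_eq_same] at h_ge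
  have h_ne : u i ≠ 0 := Finsupp.mem_support_iff.mp hi
  have h_row := hu.row_le i (by lia)
  have h_low : (N : K) ≤ u i + i := by exact_mod_cast (by lia : N ≤ u i + i)
  have h_up : ((N - 1 - i : ℕ) : K) ≤ N := Nat.cast_le.mpr (by lia)
  rw [abs_le]
  constructor <;> linarith [hu.column_le i]

end Positivity

section MomentBound

section Expansion

variable {K : Type*} [CommRing K]

local notation "𝐲" => (Polynomial.X : MarkedPowerSums K)
local notation "𝐂" => (Polynomial.C : PowerSums K →+* MarkedPowerSums K)

variable (K) in
/-- The power sum monomial of the cycle type `k`. -/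
def cycleMonomial (k : Multiset ℕ) : PowerSums K := (k.map X).prod

lemma cycleMonomial_cons (a : ℕ) (k : Multiset ℕ) :
    cycleMonomial K (a ::ₘ k) = X a * cycleMonomial K k := by
  rw [cycleMonomial, Multiset.map_cons, Multiset.prod_cons, cycleMonomial]

lemma X_pow_succ_mul_mark_cycleMonomial (m : ℕ) (k : Multiset ℕ) :
    𝐲 ^ (m + 1) * mark K (cycleMonomial K k) =
      (k.map fun j => j • (𝐂 (cycleMonomial K (k.erase j)) * 𝐲 ^ (m + j))).sum := by
  induction k using Multiset.induction_on with
  | empty => simp [cycleMonomial]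
  | cons a k ih =>
    rw [cycleMonomial_cons, X_pow_succ_mul_mark_X_mul, ih, Multiset.map_cons, Multiset.sum_cons,
      Multiset.erase_cons_head, add_comm, ← Multiset.sum_map_mul_left]
    congr 2
    refine Multiset.map_congr rfl fun j hj => ?_
    rw [Multiset.erase_cons_tail_of_mem hj, cycleMonomial_cons, map_mul, mul_smul_comm, mul_assoc]

lemma X_pow_succ_mul_mark_X_one_pow_mul (m r : ℕ) (g : PowerSums K) :
    𝐲 ^ (m + 1) * mark K (X 1 ^ (r + 1) * g) =
      (r + 1) • (𝐂 (X 1 ^ r * g) * 𝐲 ^ (m + 1)) +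
        𝐂 (X 1 ^ (r + 1)) * (𝐲 ^ (m + 1) * mark K g) := by
  induction r with
  | zero => rw [zero_add, pow_one, X_pow_succ_mul_mark_X_mul, pow_zero, one_mul, add_comm]
  | succ r ih =>
    rw [pow_succ' (X 1) (r + 1), mul_assoc, X_pow_succ_mul_mark_X_mul, ih]
    simp only [map_mul, map_pow, nsmul_eq_mul]
    push_cast
    ring

lemma jucysMurphy_X_one_pow_mul_cycleMonomial (m r : ℕ) (k : Multiset ℕ) :
    jucysMurphy K (𝐂 (X 1 ^ (r + 1) * cycleMonomial K k) * 𝐲 ^ m) =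
      (r + 1) • (𝐂 (X 1 ^ r * cycleMonomial K k) * 𝐲 ^ (m + 1)) +
        (k.map fun j =>
          j • (𝐂 (X 1 ^ (r + 1) * cycleMonomial K (k.erase j)) * 𝐲 ^ (m + j))).sum +
        ∑ i ∈ Ico 1 (m + 1), 𝐂 (X 1 ^ (r + 1) * cycleMonomial K (i ::ₘ k)) * 𝐲 ^ (m - i) := by
  rw [jucysMurphy_C_mul_X_pow, X_pow_succ_mul_mark_X_one_pow_mul, X_pow_succ_mul_mark_cycleMonomial,
    ← Multiset.sum_map_mul_left]
  simp only [cycleMonomial_cons, mul_left_comm (X _), mul_smul_comm, map_mul, mul_assoc]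

variable {N : ℕ}

/-- The functional `G ↦ φ_u (J ^ q G)`, where `φ_u` is `frobeniusCoeff u` with the mark forgotten
and `J` is the Jucys-Murphy element.  On unmarked cycle types, it is the `q`-th moment of a signed
measure supported on the contents of removable boxes. -/
def jucysMurphyMoment (u : Fin N →₀ ℕ) (q : ℕ) : MarkedPowerSums K →ₗ[K] K :=
  frobeniusCoeff u ∘ₗ forgetMark K ∘ₗ jucysMurphy K ^ q

lemma jucysMurphyMoment_jucysMurphy (u : Fin N →₀ ℕ) (q : ℕ) (G : MarkedPowerSums K) :
    jucysMurphyMoment u q (jucysMurphy K G) = jucysMurphyMoment u (q + 1) G := by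
  rw [jucysMurphyMoment, jucysMurphyMoment, pow_succ]
  rfl

lemma jucysMurphyMoment_zero (u : Fin N →₀ ℕ) (m : ℕ) (g : PowerSums K) :
    jucysMurphyMoment u 0 (𝐂 g * 𝐲 ^ m) = frobeniusCoeff u (X (m + 1) * g) := by
  rw [jucysMurphyMoment, pow_zero, LinearMap.comp_apply, LinearMap.comp_apply,
    Module.End.one_apply, forgetMark_C_mul_X_pow]

lemma succ_mul_jucysMurphyMoment (u : Fin N →₀ ℕ) (q m r : ℕ) (k : Multiset ℕ) :
    (r + 1) * jucysMurphyMoment u q (𝐂 (X 1 ^ r * cycleMonomial K k) * 𝐲 ^ (m + 1)) =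
      jucysMurphyMoment u (q + 1) (𝐂 (X 1 ^ (r + 1) * cycleMonomial K k) * 𝐲 ^ m) -
        (k.map fun j => j * jucysMurphyMoment u q
          (𝐂 (X 1 ^ (r + 1) * cycleMonomial K (k.erase j)) * 𝐲 ^ (m + j))).sum -
        ∑ i ∈ Ico 1 (m + 1), jucysMurphyMoment u q
          (𝐂 (X 1 ^ (r + 1) * cycleMonomial K (i ::ₘ k)) * 𝐲 ^ (m - i)) := by
  rw [← jucysMurphyMoment_jucysMurphy, jucysMurphy_X_one_pow_mul_cycleMonomial, map_add, map_add,
    map_nsmul, map_sum, map_multiset_sum, Multiset.map_map]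
  simp only [Function.comp_def, map_nsmul]
  simp only [nsmul_eq_mul]
  push_cast
  ring

/-- The multiplicative extension of a weight on cycle lengths to cycle types. -/
def cycleWeight (w : ℕ → K) (k : Multiset ℕ) : K := (k.map w).prod

/-- The bound for `succ_mul_jucysMurphyMoment` in which the marked cycle type `y ^ m p_k` has the
weight `w (m + 1) * cycleWeight w k` and `J` contributes a factor `R`. -/
def cutAndJoinWeight (R : K) (w : ℕ → K) (m : ℕ) (k : Multiset ℕ) : K :=
  R * (w (m + 1) * cycleWeight w k) +
    (k.map fun j => j * (w (m + j + 1) * cycleWeight w (k.erase j))).sum +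
    ∑ i ∈ Ico 1 (m + 1), w (m - i + 1) * (w i * cycleWeight w k)

lemma cycleWeight_cons (w : ℕ → K) (a : ℕ) (k : Multiset ℕ) :
    cycleWeight w (a ::ₘ k) = w a * cycleWeight w k := by
  rw [cycleWeight, Multiset.map_cons, Multiset.prod_cons, cycleWeight]

end Expansion

variable {K : Type*} [CommRing K] [LinearOrder K] {N : ℕ}

local notation "𝐲" => (Polynomial.X : MarkedPowerSums K)
local notation "𝐂" => (Polynomial.C : PowerSums K →+* MarkedPowerSums K)

/-- The bound for the moments of marked cycle types of size `s` which is proved by induction on `s`;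
here `r₀` is the minimal number of additional fixed points. -/
def MomentBound (N : ℕ) (R : K) (w : ℕ → K) (r₀ s : ℕ) : Prop :=
  ∀ (u : Fin N →₀ ℕ) (q m r : ℕ) (k : Multiset ℕ), IsBalanced R u → (∀ j ∈ k, 1 ≤ j) →
    m + 1 + k.sum = s → r₀ ≤ r →
      |jucysMurphyMoment u q (𝐂 (X 1 ^ r * cycleMonomial K k) * 𝐲 ^ m)| ≤
        frobeniusCoeff u (X 1 ^ (s + r)) * (R ^ q * (w (m + 1) * cycleWeight w k))

variable [IsStrictOrderedRing K] {R : K} {w : ℕ → K} {r₀ s : ℕ} {u : Fin N →₀ ℕ} {k : Multiset ℕ}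

lemma cycleWeight_nonneg (hw : ∀ j, 0 ≤ w j) (k : Multiset ℕ) : 0 ≤ cycleWeight w k :=
  Multiset.prod_nonneg fun x hx => by
    obtain ⟨j, -, rfl⟩ := Multiset.mem_map.mp hx
    exact hw j

lemma MomentBound.abs_frobeniusCoeff_le (h : MomentBound N R w r₀ k.sum) (hu : IsBalanced R u)
    (hk : ∀ j ∈ k, 1 ≤ j) {r : ℕ} (hr : r₀ ≤ r) :
    |frobeniusCoeff u (X 1 ^ r * cycleMonomial K k)| ≤
      frobeniusCoeff u (X 1 ^ (k.sum + r)) * cycleWeight w k := by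
  rcases k.empty_or_exists_mem with rfl | ⟨a, ha⟩
  · have h_nonneg : 0 ≤ frobeniusCoeff u (X 1 ^ r : PowerSums K) :=
      frobeniusCoeff_X_one_pow_nonneg hu.strictAnti r
    simp [cycleMonomial, cycleWeight, abs_of_nonneg h_nonneg]
  obtain ⟨k, rfl⟩ := Multiset.exists_cons_of_mem ha
  obtain ⟨m, rfl⟩ := Nat.exists_eq_add_of_le' (hk a ha)
  have h_moment := h u 0 m r k hu (fun j hj => hk j (Multiset.mem_cons_of_mem hj))
    (Multiset.sum_cons _ _).symm hr
  rwa [jucysMurphyMoment_zero, pow_zero, one_mul, mul_left_comm, ← cycleMonomial_cons,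
    ← cycleWeight_cons] at h_moment

lemma MomentBound.abs_jucysMurphyMoment_C_le (h : MomentBound N R w r₀ k.sum)
    (hR : 0 ≤ R) (hu : IsBalanced R u) (hk : ∀ j ∈ k, 1 ≤ j) {r : ℕ} (hr : r₀ ≤ r) (q : ℕ) :
    |jucysMurphyMoment u q (𝐂 (X 1 ^ r * cycleMonomial K k))| ≤
      frobeniusCoeff u (X 1 ^ (k.sum + 1 + r)) * (R ^ q * cycleWeight w k) := by
  rw [jucysMurphyMoment, LinearMap.comp_apply, LinearMap.comp_apply,
    frobeniusCoeff_forgetMark_jucysMurphy_pow, show k.sum + 1 + r = k.sum + r + 1 by ring,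
    pow_succ', frobeniusCoeff_X_one_mul, sum_mul]
  refine (abs_sum_le_sum_abs _ _).trans (sum_le_sum fun i hi => ?_)
  by_cases h_inj : Function.Injective (u - Finsupp.single i 1 : Fin N →₀ ℕ)
  · rw [abs_mul, abs_pow, mul_left_comm]
    exact mul_le_mul (pow_le_pow_left₀ (abs_nonneg _) (hu.abs_sub_le hi h_inj) q)
      (h.abs_frobeniusCoeff_le (hu.sub_single i h_inj) hk hr) (abs_nonneg _) (pow_nonneg hR q)
  · simp only [frobeniusCoeff_eq_zero_of_not_injective h_inj, mul_zero, zero_mul, abs_zero, le_refl]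

lemma MomentBound.succ_mul_abs_jucysMurphyMoment_le (h : MomentBound N R w r₀ s)
    (hu : IsBalanced R u) (hk : ∀ j ∈ k, 1 ≤ j) {m : ℕ} (hs : m + 1 + k.sum = s) {r : ℕ}
    (hr : r₀ ≤ r) (q : ℕ) :
    (r + 1) * |jucysMurphyMoment u q (𝐂 (X 1 ^ r * cycleMonomial K k) * 𝐲 ^ (m + 1))| ≤
      frobeniusCoeff u (X 1 ^ (s + 1 + r)) * (R ^ q * cutAndJoinWeight R w m k) := by
  have hr' : r₀ ≤ r + 1 := hr.trans r.le_succ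
  have h_pow : s + (r + 1) = s + 1 + r := by ring
  have h_main := h u (q + 1) m (r + 1) k hu hk hs hr'
  have h_join : ∀ j ∈ k, |j * jucysMurphyMoment u q
      (𝐂 (X 1 ^ (r + 1) * cycleMonomial K (k.erase j)) * 𝐲 ^ (m + j))| ≤
      frobeniusCoeff u (X 1 ^ (s + 1 + r)) * R ^ q *
        (j * (w (m + j + 1) * cycleWeight w (k.erase j))) := by
    intro j hj
    have h_sum := Multiset.sum_erase hj
    have hb := h u q (m + j) (r + 1) (k.erase j) hu
      (fun i hi => hk i (Multiset.mem_of_mem_erase hi)) (by lia) hr'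
    rw [abs_mul, Nat.abs_cast, mul_left_comm, mul_assoc, ← h_pow]
    exact mul_le_mul_of_nonneg_left hb (Nat.cast_nonneg j)
  have h_cut : ∀ i ∈ Ico 1 (m + 1), |jucysMurphyMoment u q
      (𝐂 (X 1 ^ (r + 1) * cycleMonomial K (i ::ₘ k)) * 𝐲 ^ (m - i))| ≤
      frobeniusCoeff u (X 1 ^ (s + 1 + r)) * R ^ q *
        (w (m - i + 1) * (w i * cycleWeight w k)) := by
    intro i hi
    obtain ⟨hi₁, him⟩ := mem_Ico.mp hi
    have hb := h u q (m - i) (r + 1) (i ::ₘ k) hu (Multiset.forall_mem_cons.mpr ⟨hi₁, hk⟩)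
      (by rw [Multiset.sum_cons]; lia) hr'
    rwa [cycleWeight_cons, ← mul_assoc, h_pow] at hb
  have h_join_sum := Multiset.abs_sum_le_sum_abs.trans
    (((congrArg Multiset.sum (Multiset.map_map _ _ k)).trans_le
      (Multiset.sum_map_le_sum_map _ _ h_join)).trans_eq Multiset.sum_map_mul_left)
  have h_cut_sum := (abs_sum_le_sum_abs _ _).trans
    ((sum_le_sum h_cut).trans_eq (mul_sum _ _ _).symm)
  rw [← abs_of_pos (by positivity : (0 : K) < r + 1), ← abs_mul, succ_mul_jucysMurphyMoment]
  refine (abs_sub _ _).trans ((add_le_add (abs_sub _ _) le_rfl).trans ?_)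
  rw [h_pow] at h_main
  rw [cutAndJoinWeight]
  linear_combination h_main + h_join_sum + h_cut_sum

lemma momentBound_of_cutAndJoinWeight_le (hR : 0 ≤ R) (hw_one : w 1 = 1) (hw : ∀ j, 0 ≤ w j)
    {s₀ : ℕ} (h_weight : ∀ m k, (∀ j ∈ k, 1 ≤ j) → m + 2 + k.sum ≤ s₀ →
      cutAndJoinWeight R w m k ≤ (r₀ + 1) * (w (m + 2) * cycleWeight w k)) (hs : s ≤ s₀) :
    MomentBound N R w r₀ s := by
  induction s with
  | zero => exact fun u q m r k _ _ h => absurd h (by lia)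
  | succ s ih =>
    intro u q m r k hu hk hmk hr
    cases m with
    | zero =>
      obtain rfl : s = k.sum := by lia
      rw [pow_zero, mul_one, zero_add, hw_one, one_mul]
      exact (ih (by lia)).abs_jucysMurphyMoment_C_le hR hu hk hr q
    | succ m =>
      have hd : 0 ≤ frobeniusCoeff u (X 1 ^ (s + 1 + r) : PowerSums K) * R ^ q :=
        mul_nonneg (frobeniusCoeff_X_one_pow_nonneg hu.strictAnti _) (pow_nonneg hR q)
      have hw_nonneg : 0 ≤ w (m + 2) * cycleWeight w k :=
        mul_nonneg (hw _) (cycleWeight_nonneg hw k)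
      have h_weight' : cutAndJoinWeight R w m k ≤ (r + 1) * (w (m + 2) * cycleWeight w k) :=
        (h_weight m k hk (by lia)).trans (by gcongr)
      refine le_of_mul_le_mul_left ?_ (by positivity : (0 : K) < r + 1)
      calc _ ≤ _ := (ih (by lia)).succ_mul_abs_jucysMurphyMoment_le hu hk (by lia) hr q
        _ ≤ _ := ?_
      linear_combination mul_le_mul_of_nonneg_left h_weight' hd

end MomentBound

section Weights

variable {α η M R : ℝ} {i j m s : ℕ} {k : Multiset ℕ}

lemma rpow_neg_le_mul_rpow_neg (hα : 0 ≤ α) (hα' : α ≤ 1) {c x y : ℝ} (hc : 1 ≤ c) (hx : 0 < x)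
    (hy : 0 < y) (h : y ≤ c * x) : x ^ (-α) ≤ c * y ^ (-α) := by
  have h_pow : y ^ α ≤ c * x ^ α :=
    calc y ^ α ≤ (c * x) ^ α := Real.rpow_le_rpow hy.le h hα
      _ = c ^ α * x ^ α := Real.mul_rpow (by positivity) hx.le
      _ ≤ c ^ (1 : ℝ) * x ^ α := by gcongr
      _ = c * x ^ α := by rw [Real.rpow_one]
  rwa [Real.rpow_neg hx.le, Real.rpow_neg hy.le, ← div_eq_mul_inv, inv_le_iff_one_le_mul₀
    (by positivity), div_mul_eq_mul_div, le_div_iff₀ (by positivity), one_mul]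

lemma rpow_neg_le_sub_rpow_div (hα : 0 ≤ α) (hα' : α < 1) {x : ℝ} (hx : 0 ≤ x) :
    (x + 1) ^ (-α) ≤ ((x + 1) ^ (1 - α) - x ^ (1 - α)) / (1 - α) := by
  have hx' : 0 < x + 1 := by positivity
  have h_bernoulli : (1 + -(x + 1)⁻¹) ^ (1 - α) ≤ 1 + (1 - α) * -(x + 1)⁻¹ :=
    rpow_one_add_le_one_add_mul_self (by linarith [inv_le_one_of_one_le₀ (by linarith : 1 ≤ x + 1)])
      (by linarith) (by linarith)
  have h_factor : x = (x + 1) * (1 + -(x + 1)⁻¹) := by field_simp; ring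
  have h_pow : (x + 1) ^ (-α) = (x + 1) ^ (1 - α) * (x + 1)⁻¹ := by
    rw [← Real.rpow_neg_one (x + 1), ← Real.rpow_add hx']; ring_nf
  have h_base : 0 ≤ 1 + -(x + 1)⁻¹ := by
    linarith [inv_le_one_of_one_le₀ (by linarith : 1 ≤ x + 1)]
  rw [le_div_iff₀ (by linarith), h_pow]
  nth_rw 4 [h_factor]
  rw [Real.mul_rpow hx'.le h_base]
  linear_combination (x + 1) ^ (1 - α) * h_bernoulli

lemma sum_rpow_neg_le (hα : 0 ≤ α) (hα' : α < 1) (m : ℕ) :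
    ∑ i ∈ Ico 1 (m + 1), (i : ℝ) ^ (-α) ≤ (m : ℝ) ^ (1 - α) / (1 - α) := by
  induction m with
  | zero => simp [Real.zero_rpow (by linarith : 1 - α ≠ 0)]
  | succ m ih =>
    have h_step := rpow_neg_le_sub_rpow_div hα hα' (Nat.cast_nonneg m : (0 : ℝ) ≤ m)
    rw [sum_Ico_succ_top (by lia)]
    push_cast
    linear_combination ih + h_step

lemma sum_rpow_neg_mul_rpow_neg_le (hα : 0 ≤ α) (hα' : α < 1) (m : ℕ) :
    ∑ i ∈ Ico 1 (m + 1), ((m - i + 1 : ℕ) : ℝ) ^ (-α) * (i : ℝ) ^ (-α) ≤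
      8 * (m : ℝ) ^ (1 - α) / (1 - α) * ((m + 2 : ℕ) : ℝ) ^ (-α) := by
  have h_max : ∀ {a b : ℕ}, 1 ≤ a → a ≤ b → a + b = m + 1 →
      (a : ℝ) ^ (-α) * (b : ℝ) ^ (-α) ≤ 4 * ((m + 2 : ℕ) : ℝ) ^ (-α) * (a : ℝ) ^ (-α) := by
    intro a b ha hab h_add
    rw [mul_comm]
    gcongr
    exact rpow_neg_le_mul_rpow_neg hα hα'.le (by norm_num) (by exact_mod_cast ha.trans hab)
      (by positivity) (by exact_mod_cast (by lia : m + 2 ≤ 4 * b))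
  have h_term : ∀ i ∈ Ico 1 (m + 1), ((m - i + 1 : ℕ) : ℝ) ^ (-α) * (i : ℝ) ^ (-α) ≤
      4 * ((m + 2 : ℕ) : ℝ) ^ (-α) * (((m + 1 - i : ℕ) : ℝ) ^ (-α) + (i : ℝ) ^ (-α)) := by
    intro i hi
    obtain ⟨hi₁, him⟩ := mem_Ico.mp hi
    have h_nonneg (j : ℕ) : 0 ≤ 4 * ((m + 2 : ℕ) : ℝ) ^ (-α) * (j : ℝ) ^ (-α) := by positivity
    rw [show m - i + 1 = m + 1 - i by lia, mul_add]
    rcases le_total i (m + 1 - i) with h | h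
    · have hb := h_max hi₁ h (by lia)
      linarith [h_nonneg (m + 1 - i)]
    · have hb := h_max (by lia : 1 ≤ m + 1 - i) h (by lia)
      linarith [h_nonneg i]
  have h_reflect := sum_Ico_reflect (fun i => (i : ℝ) ^ (-α)) 1 (Nat.le_succ (m + 1))
  rw [Nat.add_sub_cancel_left, Nat.add_sub_cancel] at h_reflect
  calc _ ≤ _ := sum_le_sum h_term
    _ = 8 * ((m + 2 : ℕ) : ℝ) ^ (-α) * ∑ i ∈ Ico 1 (m + 1), (i : ℝ) ^ (-α) := by
      rw [← mul_sum, sum_add_distrib, h_reflect]; ring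
    _ ≤ 8 * ((m + 2 : ℕ) : ℝ) ^ (-α) * ((m : ℝ) ^ (1 - α) / (1 - α)) := by
      gcongr; exact sum_rpow_neg_le hα hα' m
    _ = _ := by ring

/-- The weight of a cycle of length `j` used to bound characters: each transposition costs `η`, and
the factor `j ^ (-α)` makes the cycle lengths summable against the cut and join terms. -/
def lengthWeight (α η : ℝ) (j : ℕ) : ℝ := (j : ℝ) ^ (-α) * η ^ (j - 1)

lemma lengthWeight_one : lengthWeight α η 1 = 1 := by simp [lengthWeight]

lemma lengthWeight_nonneg (hη : 0 ≤ η) (j : ℕ) : 0 ≤ lengthWeight α η j := by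
  rw [lengthWeight]; positivity

lemma lengthWeight_le_pow (hα : 0 ≤ α) (hη : 0 ≤ η) (hj : 1 ≤ j) :
    lengthWeight α η j ≤ η ^ (j - 1) :=
  mul_le_of_le_one_left (by positivity)
    (Real.rpow_le_one_of_one_le_of_nonpos (by exact_mod_cast hj) (neg_nonpos.mpr hα))

lemma cycleWeight_lengthWeight_le_pow (hα : 0 ≤ α) (hη : 0 ≤ η) (hk : ∀ j ∈ k, 1 ≤ j) :
    cycleWeight (lengthWeight α η) k ≤ η ^ (k.sum - k.card) := by
  induction k using Multiset.induction_on with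
  | empty => simp [cycleWeight]
  | cons a k ih =>
    obtain ⟨ha, hk⟩ := Multiset.forall_mem_cons.mp hk
    have h_card : k.card ≤ k.sum := by simpa using Multiset.card_nsmul_le_sum hk
    rw [cycleWeight_cons, Multiset.sum_cons, Multiset.card_cons,
      show a + k.sum - (k.card + 1) = a - 1 + (k.sum - k.card) by lia, pow_add]
    exact mul_le_mul (lengthWeight_le_pow hα hη ha) (ih hk)
      (cycleWeight_nonneg (lengthWeight_nonneg hη) k) (by positivity)

lemma mul_lengthWeight_le (hα : 0 ≤ α) (hα' : α ≤ 1) (hη : 0 ≤ η) (m : ℕ) :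
    η * lengthWeight α η (m + 1) ≤ 2 * lengthWeight α η (m + 2) := by
  have h_rpow : ((m + 1 : ℕ) : ℝ) ^ (-α) ≤ 2 * ((m + 2 : ℕ) : ℝ) ^ (-α) :=
    rpow_neg_le_mul_rpow_neg hα hα' (by norm_num) (by positivity) (by positivity)
      (by push_cast; linarith [(Nat.cast_nonneg m : (0 : ℝ) ≤ m)])
  rw [lengthWeight, lengthWeight, show m + 2 - 1 = m + 1 from rfl, Nat.add_sub_cancel, pow_succ]
  linear_combination (η ^ m * η) * h_rpow

lemma lengthWeight_add_le (hα : 0 ≤ α) (hη : 0 ≤ η) (hj : 1 ≤ j) (m : ℕ) :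
    lengthWeight α η (m + j + 1) ≤
      (j : ℝ) ^ α * (lengthWeight α η (m + 2) * lengthWeight α η j) := by
  have hj' : (0 : ℝ) < j := by exact_mod_cast hj
  have h_anti : ((m + j + 1 : ℕ) : ℝ) ^ (-α) ≤ ((m + 2 : ℕ) : ℝ) ^ (-α) :=
    Real.rpow_le_rpow_of_nonpos (by positivity) (by exact_mod_cast (by lia : m + 2 ≤ m + j + 1))
      (neg_nonpos.mpr hα)
  calc lengthWeight α η (m + j + 1) ≤ ((m + 2 : ℕ) : ℝ) ^ (-α) * η ^ (m + 1 + (j - 1)) := by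
        rw [lengthWeight, show m + j + 1 - 1 = m + 1 + (j - 1) by lia]; gcongr
    _ = (j : ℝ) ^ α * (j : ℝ) ^ (-α) * (((m + 2 : ℕ) : ℝ) ^ (-α) * η ^ (m + 1 + (j - 1))) := by
        rw [← Real.rpow_add hj', add_neg_cancel, Real.rpow_zero, one_mul]
    _ = _ := by rw [lengthWeight, lengthWeight, pow_add, show m + 2 - 1 = m + 1 from rfl]; ring

lemma joinWeight_le (hα : 0 ≤ α) (hη : 0 ≤ η) (hk : ∀ j ∈ k, 1 ≤ j) (m : ℕ) :
    (k.map fun j : ℕ => (j : ℝ) *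
      (lengthWeight α η (m + j + 1) * cycleWeight (lengthWeight α η) (k.erase j))).sum ≤
      (k.sum : ℝ) ^ (1 + α) * (lengthWeight α η (m + 2) * cycleWeight (lengthWeight α η) k) := by
  set w := lengthWeight α η
  have hw : ∀ j, 0 ≤ w j := lengthWeight_nonneg hη
  have hQ : 0 ≤ w (m + 2) * cycleWeight w k := mul_nonneg (hw _) (cycleWeight_nonneg hw k)
  have h_term : ∀ j ∈ k, (j : ℝ) * (w (m + j + 1) * cycleWeight w (k.erase j)) ≤
      (j : ℝ) * ((k.sum : ℝ) ^ α * (w (m + 2) * cycleWeight w k)) := by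
    intro j hj
    have h_le : (j : ℝ) ≤ k.sum := by exact_mod_cast Multiset.le_sum_of_mem hj
    refine mul_le_mul_of_nonneg_left ?_ (Nat.cast_nonneg j)
    calc _ ≤ (j : ℝ) ^ α * (w (m + 2) * w j) * cycleWeight w (k.erase j) :=
          mul_le_mul_of_nonneg_right (lengthWeight_add_le hα hη (hk j hj) m)
            (cycleWeight_nonneg hw _)
      _ = (j : ℝ) ^ α * (w (m + 2) * cycleWeight w k) := by
          nth_rw 2 [← Multiset.cons_erase hj]; rw [cycleWeight_cons]; ring
      _ ≤ _ := by gcongr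
  calc _ ≤ _ := Multiset.sum_map_le_sum_map _ _ h_term
    _ = (k.sum : ℝ) ^ (1 : ℝ) * (k.sum : ℝ) ^ α * (w (m + 2) * cycleWeight w k) := by
      rw [Multiset.sum_map_mul_right, ← Nat.cast_multiset_sum, Real.rpow_one, mul_assoc]
    _ = _ := by rw [← Real.rpow_add_of_nonneg (Nat.cast_nonneg _) zero_le_one hα]

lemma sq_mul_sum_lengthWeight_mul_le (hα : 0 ≤ α) (hα' : α < 1) (hη : 0 ≤ η) (m : ℕ) :
    η ^ 2 * ∑ i ∈ Ico 1 (m + 1), lengthWeight α η (m - i + 1) * lengthWeight α η i ≤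
      8 * (m : ℝ) ^ (1 - α) / (1 - α) * lengthWeight α η (m + 2) := by
  have h_term : ∀ i ∈ Ico 1 (m + 1),
      η ^ 2 * (lengthWeight α η (m - i + 1) * lengthWeight α η i) =
        ((m - i + 1 : ℕ) : ℝ) ^ (-α) * (i : ℝ) ^ (-α) * η ^ (m + 1) := by
    intro i hi
    obtain ⟨hi₁, him⟩ := mem_Ico.mp hi
    rw [show m + 1 = 2 + (m - i + 1 - 1) + (i - 1) by lia, pow_add, pow_add, lengthWeight,
      lengthWeight]
    ring
  rw [mul_sum, sum_congr rfl h_term, ← sum_mul, lengthWeight, show m + 2 - 1 = m + 1 from rfl,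
    ← mul_assoc]
  exact mul_le_mul_of_nonneg_right (sum_rpow_neg_mul_rpow_neg_le hα hα' m) (by positivity)

lemma cutAndJoinWeight_lengthWeight_le (hα : 0 ≤ α) (hα' : α < 1) (hη : 0 < η)
    (hR : 2 * R ≤ M * η) (h_join : (s : ℝ) ^ (1 + α) ≤ M)
    (h_cut : 8 * (s : ℝ) ^ (1 - α) / (1 - α) ≤ M * η ^ 2) (hk : ∀ j ∈ k, 1 ≤ j) (hms : m ≤ s)
    (hks : k.sum ≤ s) :
    cutAndJoinWeight R (lengthWeight α η) m k ≤
      3 * M * (lengthWeight α η (m + 2) * cycleWeight (lengthWeight α η) k) := by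
  set w := lengthWeight α η
  have hw : ∀ j, 0 ≤ w j := lengthWeight_nonneg hη.le
  have hP : 0 ≤ cycleWeight w k := cycleWeight_nonneg hw k
  have hM : 0 ≤ M := le_trans (by positivity) h_join
  have hQ : 0 ≤ w (m + 2) * cycleWeight w k := mul_nonneg (hw _) hP
  have h_content : R * w (m + 1) ≤ M * w (m + 2) := by
    refine le_of_mul_le_mul_left ?_ (by positivity : 0 < 2 * η)
    linear_combination mul_le_mul_of_nonneg_right hR (mul_nonneg hη.le (hw (m + 1))) +
      mul_le_mul_of_nonneg_left (mul_lengthWeight_le hα hα'.le hη.le m) (mul_nonneg hM hη.le)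
  have h_joins := (joinWeight_le hα hη.le hk m).trans (mul_le_mul_of_nonneg_right
    ((Real.rpow_le_rpow (by positivity) (by exact_mod_cast hks) (by positivity)).trans h_join) hQ)
  have h_cuts : ∑ i ∈ Ico 1 (m + 1), w (m - i + 1) * w i ≤ M * w (m + 2) := by
    refine le_of_mul_le_mul_left ?_ (by positivity : 0 < η ^ 2)
    calc _ ≤ 8 * (m : ℝ) ^ (1 - α) / (1 - α) * w (m + 2) :=
          sq_mul_sum_lengthWeight_mul_le hα hα' hη.le m
      _ ≤ 8 * (s : ℝ) ^ (1 - α) / (1 - α) * w (m + 2) := by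
          have : 0 < 1 - α := sub_pos.mpr hα'
          exact mul_le_mul_of_nonneg_right (by gcongr) (hw _)
      _ ≤ M * η ^ 2 * w (m + 2) := mul_le_mul_of_nonneg_right h_cut (hw _)
      _ = _ := by ring
  simp_rw [cutAndJoinWeight, ← mul_assoc (w _) (w _) (cycleWeight w k)]
  rw [← sum_mul]
  linear_combination cycleWeight w k * h_content + h_joins + cycleWeight w k * h_cuts

theorem abs_frobeniusCoeff_le_pow {N r : ℕ} {u : Fin N →₀ ℕ} (hu : IsBalanced R u) (hR₀ : 0 ≤ R)
    (hα : 0 ≤ α) (hα' : α < 1) (hη : 0 < η) (hR : 2 * R ≤ M * η)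
    (h_join : (k.sum : ℝ) ^ (1 + α) ≤ M)
    (h_cut : 8 * (k.sum : ℝ) ^ (1 - α) / (1 - α) ≤ M * η ^ 2) (hr : 3 * M ≤ r + 1)
    (hk : ∀ j ∈ k, 1 ≤ j) :
    |frobeniusCoeff u (X 1 ^ r * cycleMonomial ℝ k)| ≤
      frobeniusCoeff u (X 1 ^ (k.sum + r)) * η ^ (k.sum - k.card) := by
  have hw := lengthWeight_nonneg (α := α) hη.le
  have h_moment : MomentBound N R (lengthWeight α η) r k.sum :=
    momentBound_of_cutAndJoinWeight_le hR₀ lengthWeight_one hw (fun m k' hk' h =>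
      (cutAndJoinWeight_lengthWeight_le hα hα' hη hR h_join h_cut hk' (by lia) (by lia)).trans
        (mul_le_mul_of_nonneg_right hr (mul_nonneg (hw _) (cycleWeight_nonneg hw k')))) le_rfl
  exact (h_moment.abs_frobeniusCoeff_le hu hk le_rfl).trans (mul_le_mul_of_nonneg_left
    (cycleWeight_lengthWeight_le_pow hα hη.le hk)
    (frobeniusCoeff_X_one_pow_nonneg hu.strictAnti _))

end Weights

end

end CutAndJoin

section PermLength

open Finset Equiv

variable {n : ℕ} {π σ : Perm (Fin n)} {x : Fin n}

lemma two_mul_card_cycleType_le_sum (π : Perm (Fin n)) :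
    2 * π.cycleType.card ≤ π.cycleType.sum := by
  simpa [mul_comm] using Multiset.card_nsmul_le_sum fun _ => Perm.two_le_of_mem_cycleType

lemma sum_cycleType_le_two_mul_permLength (π : Perm (Fin n)) :
    π.cycleType.sum ≤ 2 * permLength π := by
  have h_card := two_mul_card_cycleType_le_sum π
  rw [permLength]
  lia

lemma permLength_mul_of_disjoint (h : π.Disjoint σ) :
    permLength (π * σ) = permLength π + permLength σ := by
  have hπ := two_mul_card_cycleType_le_sum π
  have hσ := two_mul_card_cycleType_le_sum σ
  simp only [permLength, h.cycleType_mul, Multiset.sum_add, Multiset.card_add]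
  lia

lemma permLength_of_isCycle (h : π.IsCycle) : permLength π = π.support.card - 1 := by
  rw [permLength, h.cycleType, Multiset.sum_singleton, Multiset.card_singleton]

lemma permLength_swap_mul_of_isCycle (h : π.IsCycle) (hx : π x ≠ x) :
    permLength (swap x (π x) * π) + 1 = permLength π := by
  by_cases hxx : π (π x) = x
  · have h_swap : π = swap x (π x) := h.eq_swap_of_apply_apply_eq_self hx hxx
    have h_one : swap x (π x) * π = 1 := by
      conv_lhs => rw [h_swap, swap_apply_left, swap_mul_self]
    rw [h_one, permLength_of_isCycle h, h_swap, Perm.card_support_swap hx.symm]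
    simp [permLength]
  · have h_cycle : (swap x (π x) * π).IsCycle := h.swap_mul hx hxx
    have h_support := Perm.support_swap_mul_eq π x hxx
    have h_two := h_cycle.two_le_card_support
    rw [permLength_of_isCycle h, permLength_of_isCycle h_cycle]
    rw [h_support, card_sdiff_of_subset (by simpa using hx), card_singleton] at h_two ⊢
    lia

lemma permLength_swap_mul (hx : π x ≠ x) :
    permLength (swap x (π x) * π) + 1 = permLength π := by
  set c := π.cycleOf x
  set g := π * c⁻¹
  have hcx : c x = π x := Perm.cycleOf_apply_self π x
  have h_disjoint : g.Disjoint c := Perm.disjoint_mul_inv_of_mem_cycleFactorsFinset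
    (Perm.cycleOf_mem_cycleFactorsFinset_iff.mpr (Perm.mem_support.mpr hx))
  have hπ : π = c * g := by rw [← h_disjoint.commute.eq, inv_mul_cancel_right]
  have h_disjoint' : (swap x (π x) * c).Disjoint g := by
    refine Perm.disjoint_iff_disjoint_support.mpr
      ((Perm.disjoint_iff_disjoint_support.mp h_disjoint.symm).mono_left fun y hy => ?_)
    exact (Perm.mem_support_swap_mul_imp_mem_support_ne (hcx ▸ hy)).1
  calc permLength (swap x (π x) * π) + 1 = permLength (swap x (π x) * c * g) + 1 := by
        rw [mul_assoc, ← hπ]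
    _ = permLength (swap x (c x) * c) + 1 + permLength g := by
        rw [permLength_mul_of_disjoint h_disjoint', hcx, add_right_comm]
    _ = permLength π := by
        rw [permLength_swap_mul_of_isCycle (Perm.isCycle_cycleOf π hx) (hcx ▸ hx),
          ← permLength_mul_of_disjoint h_disjoint.symm, ← hπ]

lemma permLength_decomposeFin_symm_zero (σ : Perm (Fin n)) :
    permLength (Perm.decomposeFin.symm (0, σ)) = permLength σ := by
  have h_extend : Perm.decomposeFin.symm (0, σ) =
      σ.extendDomain (finSuccAboveEquiv (0 : Fin (n + 1))) := by
    ext i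
    cases i using Fin.cases with
    | zero => rw [Perm.extendDomain_apply_not_subtype _ _ (by simp)]; simp
    | succ j =>
      have h_succ := Perm.extendDomain_apply_image σ (finSuccAboveEquiv (0 : Fin (n + 1))) j
      simp only [finSuccAboveEquiv_apply, Fin.succAbove_zero] at h_succ
      simp [h_succ]
  simp only [permLength, h_extend, Perm.cycleType_extendDomain]

lemma permLength_decomposeFin_symm_succ (i : Fin n) (σ : Perm (Fin n)) :
    permLength (Perm.decomposeFin.symm (i.succ, σ)) = permLength σ + 1 := by
  have h_zero : Perm.decomposeFin.symm (i.succ, σ) 0 = i.succ := by simp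
  have h_swap : swap 0 i.succ * Perm.decomposeFin.symm (i.succ, σ) =
      Perm.decomposeFin.symm (0, σ) := by
    ext j
    cases j using Fin.cases <;> simp
  have h_length := permLength_swap_mul (h_zero ▸ i.succ_ne_zero :
    Perm.decomposeFin.symm (i.succ, σ) 0 ≠ 0)
  rwa [h_zero, h_swap, permLength_decomposeFin_symm_zero, eq_comm] at h_length

theorem sum_pow_permLength {K : Type*} [CommSemiring K] (x : K) (n : ℕ) :
    ∑ π : Perm (Fin n), x ^ permLength π = ∏ i ∈ range n, (1 + i * x) := by
  induction n with
  | zero => simp [permLength]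
  | succ n ih =>
    rw [prod_range_succ, ← ih, ← Perm.decomposeFin.symm.sum_comp, Fintype.sum_prod_type,
      Fin.sum_univ_succ]
    simp_rw [permLength_decomposeFin_symm_zero, permLength_decomposeFin_symm_succ, pow_succ,
      ← sum_mul]
    rw [sum_const, card_univ, Fintype.card_fin, nsmul_eq_mul]
    ring

lemma sum_pow_permLength_le_exp {x : ℝ} (hx : 0 ≤ x) (n : ℕ) :
    ∑ π : Perm (Fin n), x ^ permLength π ≤ Real.exp (n ^ 2 * x) := by
  rw [sum_pow_permLength]
  calc ∏ i ∈ range n, (1 + i * x) ≤ ∏ _i ∈ range n, Real.exp (n * x) := by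
        refine prod_le_prod (fun i _ => by positivity) fun i hi => ?_
        have h_le : (i : ℝ) ≤ n := by exact_mod_cast (mem_range.mp hi).le
        rw [add_comm]
        exact (Real.add_one_le_exp _).trans (Real.exp_le_exp.mpr (by gcongr))
    _ = Real.exp (n ^ 2 * x) := by
        rw [prod_const, card_range, ← Real.exp_nat_mul, ← mul_assoc, sq]

lemma card_permLength_eq_mul_pow_le {x : ℝ} (hx : 0 ≤ x) (n l : ℕ) :
    #{π : Perm (Fin n) | permLength π = l} * x ^ l ≤ Real.exp (n ^ 2 * x) := by
  calc _ = ∑ π : Perm (Fin n) with permLength π = l, x ^ permLength π := by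
        rw [← nsmul_eq_mul, ← sum_const]
        exact sum_congr rfl fun π hπ => by rw [(mem_filter.mp hπ).2]
    _ ≤ ∑ π : Perm (Fin n), x ^ permLength π :=
        sum_le_sum_of_subset_of_nonneg (subset_univ _) fun _ _ _ => pow_nonneg hx _
    _ ≤ Real.exp (n ^ 2 * x) := sum_pow_permLength_le_exp hx n

end PermLength

section NormalizedCharacter

open Finset Filter MvPolynomial CutAndJoin Topology

variable {n l : ℕ} {lam : Fin n → ℕ} {α η C R : ℝ} {π : Equiv.Perm (Fin n)}

/-- The exponent vector `λ + δ` at which Frobenius' formula extracts the character of `λ`. -/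
noncomputable def shiftedPartition (lam : Fin n → ℕ) : Fin n →₀ ℕ :=
  Finsupp.equivFunOnFinite.symm fun i : Fin n => lam i + (n - 1 - (i : ℕ))

lemma shiftedPartition_apply (lam : Fin n → ℕ) (i : Fin n) :
    shiftedPartition lam i = lam i + (n - 1 - i) := rfl

lemma isBalanced_shiftedPartition (h_anti : Antitone lam)
    (h_row : (#{i | lam i ≠ 0} : ℝ) ≤ R) (h_col : ∀ i, (lam i : ℝ) ≤ R) :
    IsBalanced R (shiftedPartition lam) where
  strictAnti i j hij := by
    have h_le := h_anti hij.le
    rw [Fin.lt_def] at hij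
    simp only [shiftedPartition_apply]
    lia
  row_le i hi := by
    have hi' : lam i ≠ 0 := by rw [shiftedPartition_apply] at hi; lia
    have h_subset : Iic i ⊆ ({j | lam j ≠ 0} : Finset (Fin n)) := fun j hj => by
      have h_le := h_anti (mem_Iic.mp hj)
      exact mem_filter.mpr ⟨mem_univ j, by lia⟩
    have h_card := card_le_card h_subset
    rw [Fin.card_Iic] at h_card
    exact le_trans (by exact_mod_cast h_card) h_row
  column_le i := by
    rw [shiftedPartition_apply, Nat.cast_add, add_comm]
    gcongr
    exact h_col i

lemma cast_frobChar_eq_frobeniusCoeff (n : ℕ) (lam : Fin n → ℕ) (k : Multiset ℕ) :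
    (frobChar n lam k : ℝ) = frobeniusCoeff (shiftedPartition lam) (cycleMonomial ℝ k) := by
  rw [frobeniusCoeff_apply, frobChar, ← eq_intCast (Int.castRingHom ℝ), ← coeff_map,
    shiftedPartition, map_mul, cycleMonomial, map_multiset_prod, map_multiset_prod,
    Multiset.map_map, Multiset.map_map, alternant]
  congr 2
  · congr 1
    refine Multiset.map_congr rfl fun j _ => ?_
    simp [evalPowerSums_X, psum]
  · simp [Matrix.det_apply', map_sum, map_mul, map_prod]

lemma cycleMonomial_add_replicate_one (k : Multiset ℕ) (r : ℕ) :
    cycleMonomial ℝ (k + Multiset.replicate r 1) = X 1 ^ r * cycleMonomial ℝ k := by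
  simp [cycleMonomial, mul_comm]

lemma normChar_eq_frobeniusCoeff_div (lam : Fin n → ℕ) (π : Equiv.Perm (Fin n)) :
    normChar n lam π =
      frobeniusCoeff (shiftedPartition lam)
        (X 1 ^ (n - π.cycleType.sum) * cycleMonomial ℝ π.cycleType) /
      frobeniusCoeff (shiftedPartition lam) (X 1 ^ n) := by
  rw [normChar, cast_frobChar_eq_frobeniusCoeff, cast_frobChar_eq_frobeniusCoeff, fullCycleType,
    cycleMonomial_add_replicate_one]
  simp [cycleMonomial]

lemma natCast_le_rpow {p : ℝ} (hp : 1 ≤ p) (m : ℕ) : (m : ℝ) ≤ (m : ℝ) ^ p := by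
  rcases m.eq_zero_or_pos with rfl | hm
  · simpa using Real.rpow_nonneg le_rfl p
  · exact Real.self_le_rpow_of_one_le (by exact_mod_cast hm) hp

lemma abs_normChar_le_pow (hlam : IsBalanced R (shiftedPartition lam)) (hR : 0 ≤ R) (hα : 0 ≤ α)
    (hα' : α < 1) (hη : 0 < η) (h_content : 12 * R ≤ n * η)
    (h_join : 6 * ((2 * permLength π : ℕ) : ℝ) ^ (1 + α) ≤ n)
    (h_cut : 48 * ((2 * permLength π : ℕ) : ℝ) ^ (1 - α) / (1 - α) ≤ n * η ^ 2) :
    |normChar n lam π| ≤ η ^ permLength π := by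
  have h_support := sum_cycleType_le_two_mul_permLength π
  have : 0 < 1 - α := sub_pos.mpr hα'
  have h_le : π.cycleType.sum ≤ n := by simpa using π.sum_cycleType_le
  have h_dim : 0 ≤ frobeniusCoeff (shiftedPartition lam) (X 1 ^ n : PowerSums ℝ) :=
    frobeniusCoeff_X_one_pow_nonneg hlam.strictAnti n
  have h_join' : (π.cycleType.sum : ℝ) ^ (1 + α) ≤ n / 6 := by
    have h_mono : (π.cycleType.sum : ℝ) ^ (1 + α) ≤ ((2 * permLength π : ℕ) : ℝ) ^ (1 + α) := by
      gcongr
    linarith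
  have h_cut' : 8 * (π.cycleType.sum : ℝ) ^ (1 - α) / (1 - α) ≤ n / 6 * η ^ 2 :=
    calc _ ≤ 8 * ((2 * permLength π : ℕ) : ℝ) ^ (1 - α) / (1 - α) := by gcongr
      _ ≤ n / 6 * η ^ 2 := by linear_combination h_cut / 6
  have h_fixed : 3 * (n / 6 : ℝ) ≤ (n - π.cycleType.sum : ℕ) + 1 := by
    have h_self := natCast_le_rpow (by linarith : 1 ≤ 1 + α) π.cycleType.sum
    rw [Nat.cast_sub h_le]
    linarith
  have h_bound := abs_frobeniusCoeff_le_pow hlam hR hα hα' hη (by linarith) h_join' h_cut' h_fixed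
    fun j hj => (Equiv.Perm.one_lt_of_mem_cycleType hj).le
  rw [normChar_eq_frobeniusCoeff_div, abs_div, abs_of_nonneg h_dim]
  rw [Nat.add_sub_cancel' h_le, ← permLength] at h_bound
  exact div_le_of_le_mul₀ h_dim (by positivity) (h_bound.trans_eq (mul_comm _ _))

lemma two_mul_rpow_le {p : ℝ} (hp : 0 ≤ p) (hp' : p ≤ 1) (m : ℕ) :
    ((2 * m : ℕ) : ℝ) ^ p ≤ 2 * (m + 1 : ℝ) ^ p :=
  calc ((2 * m : ℕ) : ℝ) ^ p ≤ (2 * (m + 1 : ℝ)) ^ p := by gcongr; push_cast; linarith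
    _ = 2 ^ p * (m + 1 : ℝ) ^ p := Real.mul_rpow (by norm_num) (by positivity)
    _ ≤ 2 ^ (1 : ℝ) * (m + 1 : ℝ) ^ p := by gcongr; norm_num
    _ = 2 * (m + 1 : ℝ) ^ p := by rw [Real.rpow_one]

/-- The constant `D` in the bound `(D * (l + 1) ^ (1 - α) / n) ^ l` for the square of the normalized
character of a `C`-balanced diagram at permutations of length `l`. -/
noncomputable def characterConst (C α : ℝ) : ℝ := 144 * C ^ 2 + 96 / (1 - α)

lemma normChar_sq_le_pow (hn : 1 ≤ n) (hC : 0 ≤ C)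
    (hlam : IsBalanced (C * √n) (shiftedPartition lam)) (hα : 0 ≤ α) (hα' : α < 1)
    (h_join : 6 * ((2 * permLength π : ℕ) : ℝ) ^ (1 + α) ≤ n) :
    normChar n lam π ^ 2 ≤
      (characterConst C α * (permLength π + 1 : ℝ) ^ (1 - α) / n) ^ permLength π := by
  set l := permLength π
  have hn' : (0 : ℝ) < n := by exact_mod_cast hn
  have h_sub : 0 < 1 - α := sub_pos.mpr hα'
  have h_const : 144 * C ^ 2 ≤ characterConst C α := le_add_of_nonneg_right (by positivity)
  have h_const' : 96 / (1 - α) ≤ characterConst C α := le_add_of_nonneg_left (by positivity)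
  have h_pos : 0 < characterConst C α := (by positivity : 0 < 96 / (1 - α)).trans_le h_const'
  have h_one : 1 ≤ (l + 1 : ℝ) ^ (1 - α) := Real.one_le_rpow (by linarith [l.cast_nonneg (α := ℝ)])
    h_sub.le
  set η := √(characterConst C α * (l + 1 : ℝ) ^ (1 - α) / n)
  have hη : 0 < η := Real.sqrt_pos.mpr (by positivity)
  have hη_sq : n * η ^ 2 = characterConst C α * (l + 1 : ℝ) ^ (1 - α) := by
    rw [Real.sq_sqrt (by positivity), mul_div_cancel₀ _ hn'.ne']
  have h_content : 12 * (C * √n) ≤ n * η := by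
    refine le_of_sq_le_sq ?_ (by positivity)
    calc (12 * (C * √n)) ^ 2 = n * (144 * C ^ 2 * 1) := by
          rw [mul_pow, mul_pow, Real.sq_sqrt hn'.le]; ring
      _ ≤ n * (characterConst C α * (l + 1 : ℝ) ^ (1 - α)) := by gcongr
      _ = (n * η) ^ 2 := by rw [← hη_sq]; ring
  have h_cut : 48 * ((2 * l : ℕ) : ℝ) ^ (1 - α) / (1 - α) ≤ n * η ^ 2 := by
    calc _ ≤ 48 * (2 * (l + 1 : ℝ) ^ (1 - α)) / (1 - α) := by
          gcongr
          exact two_mul_rpow_le h_sub.le (by linarith) l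
      _ = 96 / (1 - α) * (l + 1 : ℝ) ^ (1 - α) := by ring
      _ ≤ _ := by rw [hη_sq]; gcongr
  calc normChar n lam π ^ 2 = |normChar n lam π| ^ 2 := (sq_abs _).symm
    _ ≤ (η ^ l) ^ 2 := pow_le_pow_left₀ (abs_nonneg _)
        (abs_normChar_le_pow hlam (by positivity) hα hα' hη h_content h_join h_cut) 2
    _ = _ := by rw [pow_right_comm, Real.sq_sqrt (by positivity)]

/-- A bound, independent of `n`, for the fourth moment over permutations of length `l` of the
normalized character of a `C`-balanced diagram; it is summable in `l` when `1 / 2 < α`. -/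
noncomputable def levelBound (C α : ℝ) (l : ℕ) : ℝ :=
  Real.exp 1 * (Real.exp 1 * characterConst C α ^ 2 * (l + 1 : ℝ) ^ (1 - 2 * α)) ^ l

lemma levelBound_nonneg (C α : ℝ) (l : ℕ) : 0 ≤ levelBound C α l := by
  rw [levelBound]; positivity

lemma summable_pow_of_tendsto_zero {f : ℕ → ℝ} (hf : Tendsto f atTop (𝓝 0)) :
    Summable fun l => f l ^ l := by
  have h_half : ∀ᶠ l in atTop, |f l| < 1 / 2 := by
    simpa using hf.abs.eventually_lt_const (by norm_num : |(0 : ℝ)| < 1 / 2)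
  refine Summable.of_norm_bounded_eventually_nat summable_geometric_two ?_
  filter_upwards [h_half] with l hl
  rw [norm_pow, Real.norm_eq_abs]
  exact pow_le_pow_left₀ (abs_nonneg _) hl.le l

lemma summable_levelBound (C : ℝ) (hα : 1 / 2 < α) : Summable (levelBound C α) := by
  refine (summable_pow_of_tendsto_zero ?_).mul_left _
  have h_atTop : Tendsto (fun l : ℕ => (l : ℝ) + 1) atTop atTop :=
    tendsto_atTop_add_const_right _ _ tendsto_natCast_atTop_atTop
  have h_rpow := (tendsto_rpow_neg_atTop (by linarith : 0 < 2 * α - 1)).comp h_atTop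
  simpa [Function.comp_def] using
    h_rpow.const_mul (Real.exp 1 * characterConst C α ^ 2)

lemma sum_permLength_eq_abs_normChar_pow_four_le (hn : 1 ≤ n) (hC : 0 ≤ C)
    (hlam : IsBalanced (C * √n) (shiftedPartition lam)) (hα : 0 ≤ α) (hα' : α < 1)
    (h_join : 6 * ((2 * l : ℕ) : ℝ) ^ (1 + α) ≤ n) :
    ∑ π : Equiv.Perm (Fin n) with permLength π = l, |normChar n lam π| ^ 4 ≤
      levelBound C α l := by
  have : (0 : ℝ) < n := by exact_mod_cast hn
  have hl : (0 : ℝ) < l + 1 := by positivity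
  set D := characterConst C α
  set b := (D * (l + 1 : ℝ) ^ (1 - α) / n) ^ l
  have h_four : ∀ π ∈ ({π | permLength π = l} : Finset (Equiv.Perm (Fin n))),
      |normChar n lam π| ^ 4 ≤ b ^ 2 := by
    rintro π hπ
    obtain rfl : permLength π = l := (mem_filter.mp hπ).2
    rw [show 4 = 2 * 2 from rfl, pow_mul, sq_abs]
    exact pow_le_pow_left₀ (sq_nonneg _) (normChar_sq_le_pow hn hC hlam hα hα' h_join) 2
  have h_rpow : ((l + 1 : ℝ) ^ (1 - α)) ^ 2 = (l + 1) * (l + 1 : ℝ) ^ (1 - 2 * α) := by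
    rw [← Real.rpow_mul_natCast hl.le, ← Real.rpow_one_add' hl.le (by norm_num; linarith)]
    ring_nf
  have h_split : b ^ 2 = ((l + 1) / n ^ 2 : ℝ) ^ l * (D ^ 2 * (l + 1 : ℝ) ^ (1 - 2 * α)) ^ l := by
    rw [pow_right_comm, div_pow, mul_pow, h_rpow, ← mul_pow]
    congr 1
    ring
  have h_exp : Real.exp (n ^ 2 * ((l + 1) / n ^ 2)) = Real.exp 1 * Real.exp 1 ^ l := by
    rw [mul_div_cancel₀ _ (by positivity), ← pow_succ', ← Real.exp_nat_mul]
    simp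
  calc _ ≤ #{π : Equiv.Perm (Fin n) | permLength π = l} • b ^ 2 := sum_le_card_nsmul _ _ _ h_four
    _ ≤ Real.exp (n ^ 2 * ((l + 1) / n ^ 2)) * (D ^ 2 * (l + 1 : ℝ) ^ (1 - 2 * α)) ^ l := by
      rw [nsmul_eq_mul, h_split, ← mul_assoc]
      gcongr
      exact card_permLength_eq_mul_pow_le (by positivity) n l
    _ = levelBound C α l := by rw [h_exp, levelBound, mul_assoc, ← mul_pow, mul_assoc (Real.exp 1)]

lemma sum_abs_normChar_pow_four_le_tsum (hn : 1 ≤ n) (hC : 0 ≤ C)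
    (hlam : IsBalanced (C * √n) (shiftedPartition lam)) (hα : 1 / 2 < α) (hα' : α < 1) {t : ℝ}
    (h_join : ∀ l : ℕ, (l : ℝ) ≤ t → 6 * ((2 * l : ℕ) : ℝ) ^ (1 + α) ≤ n) :
    ∑ π : Equiv.Perm (Fin n) with (permLength π : ℝ) ≤ t, |normChar n lam π| ^ 4 ≤
      ∑' l, levelBound C α l := by
  set S : Finset (Equiv.Perm (Fin n)) := {π | (permLength π : ℝ) ≤ t}
  calc ∑ π ∈ S, |normChar n lam π| ^ 4
      = ∑ l ∈ S.image permLength, ∑ π ∈ S with permLength π = l, |normChar n lam π| ^ 4 :=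
        (sum_fiberwise_of_maps_to (fun _ => mem_image_of_mem _) _).symm
    _ ≤ ∑ l ∈ S.image permLength, levelBound C α l := sum_le_sum fun l hl => by
        obtain ⟨σ, hσ, rfl⟩ := mem_image.mp hl
        refine (sum_le_sum_of_subset_of_nonneg (filter_subset_filter _ (subset_univ S))
          fun _ _ _ => by positivity).trans ?_
        exact sum_permLength_eq_abs_normChar_pow_four_le hn hC hlam (by linarith) hα'
          (h_join _ (mem_filter.mp hσ).2)
    _ ≤ ∑' l, levelBound C α l :=
        (summable_levelBound C hα).sum_le_tsum _ fun l _ => levelBound_nonneg C α l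

lemma exists_weightExponent {θ : ℝ} (hθ : θ < 2 / 3) :
    ∃ α : ℝ, 1 / 2 < α ∧ α < 1 ∧ θ * (1 + α) ≤ 1 := by
  rcases le_or_gt θ (4 / 7) with h | h
  · exact ⟨3 / 4, by norm_num, by norm_num, by linarith⟩
  · have h_pos : 0 < θ := by linarith
    refine ⟨1 / θ - 1, ?_, ?_, ?_⟩
    · rw [lt_sub_iff_add_lt, lt_div_iff₀ h_pos]
      linarith
    · rw [sub_lt_iff_lt_add, div_lt_iff₀ h_pos]
      linarith
    · rw [add_sub_cancel, mul_one_div_cancel h_pos.ne']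

lemma six_mul_two_mul_rpow_le {θ : ℝ} (hn : 1 ≤ n) (hα : 0 ≤ α) (hθ : θ * (1 + α) ≤ 1)
    (hl : (l : ℝ) ≤ 1 / 12 * (n : ℝ) ^ θ) : 6 * ((2 * l : ℕ) : ℝ) ^ (1 + α) ≤ n := by
  have hn' : (1 : ℝ) ≤ n := by exact_mod_cast hn
  have h_base : ((2 * l : ℕ) : ℝ) ≤ (n : ℝ) ^ θ / 6 := by
    push_cast
    linarith
  calc 6 * ((2 * l : ℕ) : ℝ) ^ (1 + α) ≤ 6 * ((n : ℝ) ^ θ / 6) ^ (1 + α) := by gcongr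
    _ = 6 * ((n : ℝ) ^ (θ * (1 + α)) / 6 ^ (1 + α)) := by
        rw [Real.div_rpow (by positivity) (by norm_num), ← Real.rpow_mul (by positivity)]
    _ ≤ 6 * ((n : ℝ) ^ (1 : ℝ) / 6 ^ (1 : ℝ)) := by gcongr <;> linarith
    _ = n := by rw [Real.rpow_one, Real.rpow_one, mul_div_cancel₀ _ (by norm_num)]

theorem fourth_moment_bound_general {θ : ℝ} (hθ : θ < 2 / 3) (hC : 0 ≤ C) :
    ∃ B : ℝ, ∀ n : ℕ, 1 ≤ n → ∀ lam : Fin n → ℕ, Antitone lam → ∑ i, lam i = n →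
      (#{i | lam i ≠ 0} : ℝ) ≤ C * √n → (∀ i, (lam i : ℝ) ≤ C * √n) →
      ∑ π : Equiv.Perm (Fin n) with (permLength π : ℝ) ≤ 1 / 12 * (n : ℝ) ^ θ,
        |normChar n lam π| ^ 4 ≤ B := by
  obtain ⟨α, hα, hα', h_exponent⟩ := exists_weightExponent hθ
  refine ⟨∑' l, levelBound C α l, fun n hn lam h_anti _ h_row h_col => ?_⟩
  exact sum_abs_normChar_pow_four_le_tsum hn hC
    (isBalanced_shiftedPartition h_anti h_row h_col) hα hα'
    fun l => six_mul_two_mul_rpow_le hn (by linarith) h_exponent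

end NormalizedCharacter

/-- fourth-moment bound for characters of balanced Young diagrams over
permutations of length at most `A ⋅ n^{4/7}`. -/
theorem fourth_moment_bound :
    ∀ C : ℝ, 0 < C → ∃ A : ℝ, 0 < A ∧ ∃ B : ℝ,
      ∀ (n : ℕ), 1 ≤ n →
        ∀ lam : Fin n → ℕ,
          (∀ i j : Fin n, i ≤ j → lam j ≤ lam i) →
          (∑ i, lam i = n) →
          (((Finset.univ.filter fun i : Fin n => lam i ≠ 0).card : ℝ) ≤ C * Real.sqrt n) →
          (∀ i : Fin n, (lam i : ℝ) ≤ C * Real.sqrt n) →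
          ∑ π ∈ Finset.univ.filter
              (fun π : Equiv.Perm (Fin n) =>
                (permLength π : ℝ) ≤ A * (n : ℝ) ^ ((4 : ℝ) / 7)),
            |normChar n lam π| ^ 4 ≤ B := by
  intro C hC
  obtain ⟨B, hB⟩ := fourth_moment_bound_general (by norm_num : (4 : ℝ) / 7 < 2 / 3) hC.le
  exact ⟨1 / 12, by norm_num, B, fun n hn lam h_anti => hB n hn lam fun i j => h_anti i j⟩
end

section
/- Generalized Frobenius formula: let λ be a partition of n with reciprocal Cauchy transform H, and let k₁,…,k_l ≥ 1 be integers. Then (−1)^l · k₁⋯k_l · Σ^λ_{k₁,…,k_l} = [z₁^{−1}]⋯[z_l^{−1}] [ ( ∏_{1≤r≤l} H(z_r)·H(z_r−1)⋯H(z_r−k_r+1) ) · ∏_{1≤s<t≤l} ( (z_s−z_t)(z_s−z_t+k_t−k_s) ) / ( (z_s−z_t−k_s)(z_s−z_t+k_t) ) ], where the right-hand side is computed as follows: the rational expression is expanded as a formal Laurent series in decreasing powers of z_l with coefficients that are rational functions of z₁,…,z_{l−1}, the coefficient of z_l^{−1} is extracted, and this procedure is repeated successively with respect to z_{l−1}, z_{l−2},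 …, z₁. -/
open scoped BigOperators

/-- The normalized character of a conjugacy class, as a rational number:
`Σ^λ_{k₁,…,k_l} = (n)_{k₁+⋯+k_l} ⋅ χ^λ(π)` where `π` has cycle type
`(k₁,…,k_l,1^{n-k₁-⋯-k_l})`, with the convention that it vanishes when
`k₁+⋯+k_l > n`. -/
noncomputable def SigmaChar (n : ℕ) (lam : Fin n → ℕ) (k : Multiset ℕ) : ℚ :=
  if k.sum ≤ n then
    (Nat.descFactorial n k.sum : ℚ) *
      (frobChar n lam (k + Multiset.replicate (n - k.sum) 1) : ℚ) /
      (frobChar n lam (Multiset.replicate n 1) : ℚ)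
  else 0

/-- The reciprocal Cauchy transform `H` of the partition `λ` of `n`, evaluated (in any
field) at `w`: `H(w) = (w+n) ⋅ ∏_{i=1}^n (w-λᵢ+i-1) / ∏_{i=1}^n (w-λᵢ+i)`. -/
noncomputable def Hof (n : ℕ) (lam : Fin n → ℕ) {F : Type} [Field F] (w : F) : F :=
  (w + (n : F)) * (∏ i : Fin n, (w - (lam i : F) + ((i : ℕ) : F))) /
    ∏ i : Fin n, (w - (lam i : F) + ((i : ℕ) : F) + 1)

/-- Iterated Laurent series fields: level 0 is `ℚ`, level `l+1` is the field of formal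
Laurent series over level `l`. -/
noncomputable def ItL : ℕ → (T : Type) × Field T
  | 0 => ⟨ℚ, inferInstance⟩
  | l + 1 =>
    haveI := (ItL l).2
    ⟨LaurentSeries (ItL l).1, inferInstance⟩

/-- The underlying type of the `l`-th iterated Laurent series field. -/
abbrev ItLT (l : ℕ) : Type := (ItL l).1

noncomputable instance (l : ℕ) : Field (ItLT l) := (ItL l).2

/-- The variable `z_{r+1}` (for `0 ≤ r < l`), as an element of the `l`-th iterated
Laurent series field: it is the inverse of the formal variable of the `(r+1)`-st level,
so that expansions in increasing powers of the level-`(r+1)` formal variable are exactly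
expansions in decreasing powers of `z_{r+1}`, with coefficients that are (expansions of)
functions of `z_1, …, z_r`. -/
noncomputable def zVar : (l : ℕ) → ℕ → ItLT l
  | 0, _ => 0
  | l + 1, r =>
    if r = l then
      (show LaurentSeries (ItLT l) from (HahnSeries.single (1 : ℤ) (1 : ItLT l))⁻¹)
    else
      (show LaurentSeries (ItLT l) from HahnSeries.C (zVar l r))

/-- Iterated coefficient extraction `[z₁^{-1}] ⋯ [z_l^{-1}]`: successively take the
coefficient of `z^{-1}` in the expansion in decreasing powers of `z = z_l, z_{l-1}, …`,
i.e. the coefficient of the first power of the formal variable at each level. -/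
noncomputable def extractInv : (l : ℕ) → ItLT l → ℚ
  | 0, x => x
  | l + 1, f => extractInv l ((show LaurentSeries (ItLT l) from f).coeff 1)

/-!
For generic `z₁, …, z_l`, the denominator of the integrand is monic in `z_l` up to factors free of
`z_l`, so the coefficient of `z_l⁻¹` is read off a polynomial remainder. Apart from the integrand in
the other variables, it is a polynomial in them, and `z_{l-1}, …, z₁` can be eliminated in the same
way.

The resulting number is evaluated in the opposite order. Put `m = λ + δ`. The poles in `z₁` are the
points `mᵢ - n`, and taking the residue at the `i`-th one removes a rim hook of length `k₁`: the
cross factors with `z₁ = mᵢ - n` turn `H` into the transform of the exponents `m - k₁ eᵢ`, the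
poles at `z₁` and `z₁ - k₁` cancelling. The formula therefore becomes a weighted sum over sequences
of hook removals. Its weights are those of the Murnaghan–Nakayama rule for the coefficients of
`p_{k₁} ⋯ p_{k_l} a_δ` multiplied by `∏ mᵢ!` and divided by the Vandermonde determinant of `m`, and
that normalization sends `p₁ ^ N * a_δ` to the constant `N!`.
-/

namespace GeneralizedFrobenius

open Finset Lagrange

section Residue

open Polynomial

/-- The coefficient of `z⁻¹` in the expansion of `N / D` in decreasing powers of `z`, for a
monic `D`. Only the polynomial remainder of `N` contributes, which makes the notion available
over every commutative ring. -/
noncomputable def residue {R : Type*} [CommRing R] (N D : R[X]) : R :=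
  (N %ₘ D).coeff (D.natDegree - 1)

theorem map_residue {R S : Type*} [CommRing R] [CommRing S] [Nontrivial S] (f : R →+* S)
    (N : R[X]) {D : R[X]} (hD : D.Monic) : f (residue N D) = residue (N.map f) (D.map f) := by
  rw [residue, residue, ← map_modByMonic f hD, coeff_map, hD.natDegree_map]

theorem residue_nodal {F ι : Type*} [Field F] [DecidableEq ι] {s : Finset ι} {v : ι → F}
    (hv : Set.InjOn v s) (N : F[X]) :
    residue N (nodal s v) = ∑ i ∈ s, N.eval (v i) * nodalWeight s v i := by
  have hdeg : (N %ₘ nodal s v).degree < #s :=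
    degree_nodal (v := v) ▸ degree_modByMonic_lt N nodal_monic
  rw [residue, natDegree_nodal, Lagrange.coeff_eq_sum hv hdeg]
  refine sum_congr rfl fun i hi => ?_
  have heval : (N %ₘ nodal s v).eval (v i) = N.eval (v i) := by
    conv_rhs => rw [← modByMonic_add_div N (nodal s v)]
    rw [eval_add, eval_mul, eval_nodal_at_node hi, zero_mul, add_zero]
  rw [heval, nodalWeight, prod_inv_distrib, div_eq_mul_inv]

variable (K : Type*) [Field K]

/-- The variable `z` of the field of formal Laurent series in `z⁻¹`. -/
noncomputable def zInfty : LaurentSeries K := HahnSeries.single (-1 : ℤ) 1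

/-- The expansion of a polynomial in `z` as a formal Laurent series in `z⁻¹`. -/
noncomputable def expandInfty : K[X] →+* LaurentSeries K :=
  eval₂RingHom HahnSeries.C (zInfty K)

variable {K}

theorem expandInfty_eq_eval (p : K[X]) :
    expandInfty K p = (p.map HahnSeries.C).eval (zInfty K) :=
  eval₂_eq_eval_map _

theorem coeff_expandInfty (p : K[X]) (a : ℤ) :
    (expandInfty K p).coeff a = if a ≤ 0 then p.coeff (-a).toNat else 0 := by
  have hp : expandInfty K p =
      ∑ j ∈ range (p.natDegree + 1), HahnSeries.single (-(j : ℤ)) (p.coeff j) := by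
    simp [expandInfty, zInfty, eval₂_eq_sum_range, HahnSeries.single_pow, HahnSeries.C_apply,
      HahnSeries.single_mul_single]
  rw [hp, HahnSeries.coeff_sum]
  simp only [HahnSeries.coeff_single]
  split_ifs with ha
  · have hj (j : ℕ) : a = -(j : ℤ) ↔ (-a).toNat = j := by omega
    simp only [hj, sum_ite_eq, mem_range, Nat.lt_succ_iff]
    split_ifs with hlt
    · rfl
    · rw [coeff_eq_zero_of_natDegree_lt (not_le.1 hlt)]
  · exact sum_eq_zero fun j _ => if_neg (by omega)

theorem expandInfty_injective : Function.Injective (expandInfty K) := by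
  refine (injective_iff_map_eq_zero _).2 fun p hp => ext fun j => ?_
  simpa [hp] using (coeff_expandInfty p (-j)).symm

theorem order_expandInfty {p : K[X]} (hp : p ≠ 0) :
    (expandInfty K p).order = -(p.natDegree : ℤ) := by
  have hne : expandInfty K p ≠ 0 := (map_ne_zero_iff _ expandInfty_injective).2 hp
  refine le_antisymm (HahnSeries.order_le_of_coeff_ne_zero ?_) ?_
  · simpa [coeff_expandInfty] using hp
  · have hcoeff := HahnSeries.coeff_order_eq_zero.not.2 hne
    rw [coeff_expandInfty] at hcoeff
    have hle := le_natDegree_of_ne_zero (ite_ne_right_iff.1 hcoeff).2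
    omega

theorem leadingCoeff_expandInfty (p : K[X]) :
    (expandInfty K p).leadingCoeff = p.leadingCoeff := by
  rcases eq_or_ne p 0 with rfl | hp
  · simp
  · simp [HahnSeries.leadingCoeff_eq, order_expandInfty hp, coeff_expandInfty]

theorem coeff_one_expandInfty_div_of_degree_lt {N D : K[X]} (hD : D.Monic)
    (hdeg : N.degree < D.degree) :
    (expandInfty K N / expandInfty K D).coeff 1 = N.coeff (D.natDegree - 1) := by
  rcases eq_or_ne N 0 with rfl | hN
  · simp
  have hD₀ : expandInfty K D ≠ 0 := (map_ne_zero_iff _ expandInfty_injective).2 hD.ne_zero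
  have hN₀ : expandInfty K N ≠ 0 := (map_ne_zero_iff _ expandInfty_injective).2 hN
  set f := expandInfty K N / expandInfty K D
  have hmul : f * expandInfty K D = expandInfty K N := div_mul_cancel₀ _ hD₀
  have hf₀ : f ≠ 0 := div_ne_zero hN₀ hD₀
  have hlt : N.natDegree < D.natDegree := natDegree_lt_natDegree hN hdeg
  have horder : f.order = D.natDegree - N.natDegree := by
    have := HahnSeries.order_mul hf₀ hD₀
    rw [hmul, order_expandInfty hN, order_expandInfty hD.ne_zero] at this
    omega
  have hlead : f.leadingCoeff = N.leadingCoeff := by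
    have := HahnSeries.leadingCoeff_mul f (expandInfty K D)
    rwa [hmul, leadingCoeff_expandInfty, leadingCoeff_expandInfty, hD.leadingCoeff, mul_one,
      eq_comm] at this
  rcases Nat.lt_or_ge (N.natDegree + 1) D.natDegree with h | h
  · rw [HahnSeries.coeff_eq_zero_of_lt_order (by omega),
      coeff_eq_zero_of_natDegree_lt (by omega)]
  · rw [show D.natDegree - 1 = N.natDegree by omega, coeff_natDegree, ← hlead,
      HahnSeries.leadingCoeff_eq, horder]
    congr 1
    omega

theorem coeff_one_expandInfty_div (N : K[X]) {D : K[X]} (hD : D.Monic) :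
    (expandInfty K N / expandInfty K D).coeff 1 = residue N D := by
  have hD₀ : expandInfty K D ≠ 0 := (map_ne_zero_iff _ expandInfty_injective).2 hD.ne_zero
  have hsplit : expandInfty K N / expandInfty K D =
      expandInfty K (N %ₘ D) / expandInfty K D + expandInfty K (N /ₘ D) := by
    conv_lhs => rw [← modByMonic_add_div N D, map_add, map_mul]
    field_simp
  rw [hsplit, HahnSeries.coeff_add,
    coeff_one_expandInfty_div_of_degree_lt hD (degree_modByMonic_lt _ hD), coeff_expandInfty,
    if_neg (by norm_num), add_zero, residue]

theorem residue_congr {N N' D D' : K[X]} (hD : D.Monic) (hD' : D'.Monic)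
    (h : N * D' = N' * D) : residue N D = residue N' D' := by
  rw [← coeff_one_expandInfty_div N hD, ← coeff_one_expandInfty_div N' hD']
  congr 1
  rw [div_eq_div_iff, ← map_mul, ← map_mul, h]
  · exact (map_ne_zero_iff _ expandInfty_injective).2 hD.ne_zero
  · exact (map_ne_zero_iff _ expandInfty_injective).2 hD'.ne_zero

end Residue

section Integrand

open Polynomial

/-- The exponents `λ + δ`. -/
noncomputable def shiftedParts (n : ℕ) (lam : Fin n → ℕ) : Fin n →₀ ℕ :=
  Finsupp.equivFunOnFinite.symm fun i => lam i + (n - 1 - (i : ℕ))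

/-- The poles of the reciprocal Cauchy transform of the partition with exponents `m = λ + δ`. -/
def nodes (R : Type*) [Ring R] {n : ℕ} (m : Fin n →₀ ℕ) (i : Fin n) : R :=
  (m i : R) - n

theorem map_comp_nodes {R S : Type*} [Ring R] [Ring S] (f : R →+* S) {n : ℕ}
    (m : Fin n →₀ ℕ) : f ∘ nodes R m = nodes S m := by
  ext i
  simp [nodes]

theorem map_nodal {R S ι : Type*} [CommRing R] [CommRing S] (f : R →+* S) (s : Finset ι)
    (v : ι → R) : (nodal s v).map f = nodal s (f ∘ v) := by
  simp [nodal, Polynomial.map_prod]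

/-- The value at `p` of a polynomial with integer coefficients. -/
noncomputable def evalAt {R : Type*} [CommRing R] (p : ℕ → R) : MvPolynomial ℕ ℤ →+* R :=
  MvPolynomial.eval₂Hom (Int.castRingHom R) p

theorem map_evalAt {R S : Type*} [CommRing R] [CommRing S] (f : R →+* S) (p : ℕ → R)
    (P : MvPolynomial ℕ ℤ) : f (evalAt p P) = evalAt (f ∘ p) P := by
  rw [evalAt, MvPolynomial.map_eval₂Hom, RingHom.ext_int (f.comp _) (Int.castRingHom S)]
  rfl

variable {n : ℕ} (lam : Fin n → ℕ) (μ : Fin n →₀ ℕ) (ks : ℕ → ℕ) (l : ℕ)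

/-- The poles in `z_{l+1}` of the integrand that do not depend on `k_{l+1}`: those of `H` and
those of the cross factors, when `z₁, …, z_l` take the values `p`. -/
noncomputable def freePoles {R : Type*} [CommRing R] (p : ℕ → R) : R[X] :=
  nodal univ (nodes R μ) * nodal (range l) fun s => p s - ks s

/-- The numerator of the integrand as a rational function of `z_{l+1}`, times `P`. -/
noncomputable def stepNum {R : Type*} [CommRing R] (p : ℕ → R) (P : MvPolynomial ℕ ℤ) : R[X] :=
  (descPochhammer R (ks l)).comp (X + C (n : R)) *
    ((freePoles μ ks l p).comp (X - C (ks l : R)) * nodal (range l) p) *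
      evalAt (Function.update (C ∘ p) l X) P

/-- The denominator of the integrand as a rational function of `z_{l+1}`. -/
noncomputable def stepDen {R : Type*} [CommRing R] (p : ℕ → R) : R[X] :=
  freePoles μ ks l p * (nodal (range l) p).comp (X - C (ks l : R))

variable {R S : Type*} [CommRing R] [CommRing S]

theorem monic_stepDen [Nontrivial R] (p : ℕ → R) : (stepDen μ ks l p).Monic :=
  (nodal_monic.mul nodal_monic).mul (nodal_monic.comp_X_sub_C _)

theorem map_freePoles (f : R →+* S) (p : ℕ → R) :
    (freePoles μ ks l p).map f = freePoles μ ks l (f ∘ p) := by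
  have hshift : (f ∘ fun s => p s - (ks s : R)) = fun s => (f ∘ p) s - ks s := by
    ext s
    simp
  rw [freePoles, Polynomial.map_mul, map_nodal, map_nodal, map_comp_nodes, hshift, freePoles]

theorem map_stepDen (f : R →+* S) (p : ℕ → R) :
    (stepDen μ ks l p).map f = stepDen μ ks l (f ∘ p) := by
  simp [stepDen, Polynomial.map_comp, map_freePoles, map_nodal]

theorem map_stepNum (f : R →+* S) (p : ℕ → R) (P : MvPolynomial ℕ ℤ) :
    (stepNum μ ks l p P).map f = stepNum μ ks l (f ∘ p) P := by
  have heval : (evalAt (Function.update (C ∘ p) l X) P).map f =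
      evalAt (Function.update (C ∘ f ∘ p) l X) P := by
    have hC : mapRingHom f ∘ C ∘ p = C ∘ f ∘ p := funext fun s => map_C f
    rw [← coe_mapRingHom, map_evalAt, Function.comp_update, hC, coe_mapRingHom, map_X]
  simp [stepNum, Polynomial.map_comp, map_freePoles, map_nodal, descPochhammer_map, heval]

theorem eval_evalAt_update (p : ℕ → R) (w : R) (P : MvPolynomial ℕ ℤ) :
    (evalAt (Function.update (C ∘ p) l X) P).eval w = evalAt (Function.update p l w) P := by
  have hC : evalRingHom w ∘ C ∘ p = p := funext fun s => eval_C
  rw [← coe_evalRingHom, map_evalAt, Function.comp_update, hC, coe_evalRingHom, eval_X]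

/-- The coefficient of `z_{l+1}⁻¹` in the part of the integrand involving `z_{l+1}`, times `P`. It
is a polynomial in the remaining variables because `stepDen` is monic in `z_{l+1}`. -/
noncomputable def elim (P : MvPolynomial ℕ ℤ) : MvPolynomial ℕ ℤ :=
  residue (stepNum μ ks l MvPolynomial.X P) (stepDen μ ks l MvPolynomial.X)

theorem evalAt_elim [Nontrivial R] (p : ℕ → R) (P : MvPolynomial ℕ ℤ) :
    evalAt p (elim μ ks l P) = residue (stepNum μ ks l p P) (stepDen μ ks l p) := by
  have hp : evalAt p ∘ MvPolynomial.X = p := funext fun s => MvPolynomial.eval₂Hom_X' _ _ s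
  rw [elim, map_residue _ _ (monic_stepDen μ ks l _), map_stepNum, map_stepDen, hp]

/-- The factor of the integrand that couples two variables `a = z_s` and `b = z_t`, `s < t`. -/
def cross {F : Type*} [Field F] (a b : F) (ka kb : ℕ) : F :=
  ((a - b) * (a - b + kb - ka)) / ((a - b - ka) * (a - b + kb))

/-- The integrand of the formula in the first `l` variables. -/
noncomputable def integrand {F : Type} [Field F] (z : ℕ → F) : F :=
  (∏ r ∈ range l, ∏ j ∈ range (ks r), Hof n lam (z r - j)) *
    ∏ t ∈ range l, ∏ s ∈ range t, cross (z s) (z t) (ks s) (ks t)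

section Field

variable {F : Type} [Field F]

theorem Hof_eq (w : F) :
    Hof n lam w = (w + n) * ((nodal univ (nodes F (shiftedParts n lam))).eval (w - 1) /
      (nodal univ (nodes F (shiftedParts n lam))).eval w) := by
  have hnode (i : Fin n) : nodes F (shiftedParts n lam) i = (lam i : F) - i - 1 := by
    have hi : shiftedParts n lam i + (i + 1) = lam i + n := by
      simp only [shiftedParts, Finsupp.equivFunOnFinite_symm_apply_apply]
      omega
    have hi' := congrArg (Nat.cast (R := F)) hi
    push_cast at hi'
    rw [nodes]
    linear_combination hi'
  simp only [Hof, eval_nodal, hnode, mul_div_assoc]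
  congr 3 <;> ext i <;> ring

theorem prod_Hof (k : ℕ) (w : F)
    (hw : ∀ j : ℕ, (nodal univ (nodes F (shiftedParts n lam))).eval (w - j) ≠ 0) :
    ∏ j ∈ range k, Hof n lam (w - j) = (descPochhammer F k).eval (w + n) *
      ((nodal univ (nodes F (shiftedParts n lam))).eval (w - k) /
        (nodal univ (nodes F (shiftedParts n lam))).eval w) := by
  induction k with
  | zero => simp [div_self (by simpa using hw 0)]
  | succ k ih =>
    have h₀ := hw 0
    have hk := hw k
    rw [Nat.cast_zero, sub_zero] at h₀
    rw [prod_range_succ, ih, Hof_eq, descPochhammer_succ_eval, sub_sub w k 1]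
    push_cast
    field_simp
    ring

theorem prod_cross (p : ℕ → F) (w : F) (k : ℕ) :
    ∏ s ∈ range l, cross (p s) w (ks s) k =
      (nodal (range l) fun s => p s - ks s).eval (w - k) * (nodal (range l) p).eval w /
        ((nodal (range l) fun s => p s - ks s).eval w * (nodal (range l) p).eval (w - k)) := by
  simp only [eval_nodal, ← prod_mul_distrib, ← prod_div_distrib]
  refine prod_congr rfl fun s _ => ?_
  rw [cross]
  congr 1 <;> ring

theorem prod_Hof_mul_prod_cross (p : ℕ → F) (w : F) (P : MvPolynomial ℕ ℤ)
    (hw : ∀ j : ℕ, (nodal univ (nodes F (shiftedParts n lam))).eval (w - j) ≠ 0) :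
    (∏ j ∈ range (ks l), Hof n lam (w - j)) * (∏ s ∈ range l, cross (p s) w (ks s) (ks l)) *
        evalAt (Function.update p l w) P =
      (stepNum (shiftedParts n lam) ks l p P).eval w /
        (stepDen (shiftedParts n lam) ks l p).eval w := by
  rw [prod_Hof _ _ _ hw, prod_cross]
  simp only [stepNum, stepDen, freePoles, eval_mul, eval_comp, eval_sub, eval_add, eval_X, eval_C,
    eval_evalAt_update]
  ring

theorem integrand_succ (z : ℕ → F) :
    integrand lam ks (l + 1) z = integrand lam ks l z *
      ((∏ j ∈ range (ks l), Hof n lam (z l - j)) *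
        ∏ s ∈ range l, cross (z s) (z l) (ks s) (ks l)) := by
  rw [integrand, prod_range_succ, prod_range_succ, mul_mul_mul_comm, integrand]

theorem map_integrand {E : Type} [Field E] (f : E →+* F) (z : ℕ → E) :
    f (integrand lam ks l z) = integrand lam ks l (f ∘ z) := by
  simp [integrand, Hof, cross]

theorem integrand_congr {z z' : ℕ → F} (h : ∀ r < l, z r = z' r) :
    integrand lam ks l z = integrand lam ks l z' := by
  rw [integrand, integrand]
  congr 1
  · exact prod_congr rfl fun r hr => by rw [h r (mem_range.1 hr)]
  · refine prod_congr rfl fun t ht => prod_congr rfl fun s hs => ?_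
    rw [h t (mem_range.1 ht), h s ((mem_range.1 hs).trans (mem_range.1 ht))]

end Field

theorem coeff_one_integrand_succ {K : Type} [Field K] (p : ℕ → K) (P : MvPolynomial ℕ ℤ) :
    (integrand lam ks (l + 1) (Function.update (HahnSeries.C ∘ p) l (zInfty K)) *
        evalAt (Function.update (HahnSeries.C ∘ p) l (zInfty K)) P).coeff 1 =
      integrand lam ks l p * evalAt p (elim (shiftedParts n lam) ks l P) := by
  set z : ℕ → LaurentSeries K := Function.update (HahnSeries.C ∘ p) l (zInfty K) with hz
  have hzl : z l = zInfty K := Function.update_self ..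
  have hzs : ∀ s < l, z s = (HahnSeries.C ∘ p) s := fun s hs =>
    Function.update_of_ne hs.ne _ _
  have hden (j : ℕ) :
      (nodal univ (nodes (LaurentSeries K) (shiftedParts n lam))).eval (zInfty K - j) ≠ 0 := by
    have hmonic : ((nodal univ (nodes K (shiftedParts n lam))).comp (X - C (j : K))).Monic :=
      nodal_monic.comp_X_sub_C _
    have hne := (map_ne_zero_iff _ expandInfty_injective).2 hmonic.ne_zero
    rw [expandInfty_eq_eval, Polynomial.map_comp, map_nodal, map_comp_nodes] at hne
    simpa using hne
  have hcross : ∏ s ∈ range l, cross (z s) (z l) (ks s) (ks l) =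
      ∏ s ∈ range l, cross ((HahnSeries.C ∘ p) s) (zInfty K) (ks s) (ks l) :=
    prod_congr rfl fun s hs => by rw [hzl, hzs s (mem_range.1 hs)]
  rw [integrand_succ, integrand_congr lam ks l hzs, ← map_integrand, hcross, hzl, mul_assoc, hz,
    prod_Hof_mul_prod_cross _ _ _ _ _ _ hden, ← map_stepNum, ← map_stepDen,
    ← expandInfty_eq_eval, ← expandInfty_eq_eval, HahnSeries.C_mul_eq_smul,
    HahnSeries.coeff_smul, coeff_one_expandInfty_div _ (monic_stepDen _ _ _ _), smul_eq_mul,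
    evalAt_elim]

theorem zVar_succ : (zVar (l + 1) : ℕ → LaurentSeries (ItLT l)) =
    Function.update (HahnSeries.C ∘ zVar l) l (zInfty (ItLT l)) := by
  ext1 r
  rw [Function.update_apply, zInfty, ← inv_one (G := ItLT l), ← HahnSeries.inv_single]
  rfl

theorem extractInv_integrand_succ (P : MvPolynomial ℕ ℤ) :
    extractInv (l + 1) (integrand lam ks (l + 1) (zVar (l + 1)) * evalAt (zVar (l + 1)) P) =
      extractInv l (integrand lam ks l (zVar l) *
        evalAt (zVar l) (elim (shiftedParts n lam) ks l P)) := by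
  rw [← coeff_one_integrand_succ, ← zVar_succ]
  rfl

end Integrand

section PathSum

open Polynomial

variable {n : ℕ}

theorem nodal_update_mul {R ι : Type*} [CommRing R] [DecidableEq ι] {s : Finset ι} {i : ι}
    (hi : i ∈ s) (v : ι → R) (a : R) :
    nodal s (Function.update v i a) * (X - C (v i)) = nodal s v * (X - C a) := by
  have herase : nodal (s.erase i) (Function.update v i a) = nodal (s.erase i) v :=
    prod_congr rfl fun j hj => by rw [Function.update_of_ne (ne_of_mem_erase hj)]
  rw [nodal_eq_mul_nodal_erase hi, nodal_eq_mul_nodal_erase (v := v) hi, herase,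
    Function.update_self]
  ring

theorem nodal_range_succ_update {R : Type*} [CommRing R] (l : ℕ) (p : ℕ → R) (a : R) :
    nodal (range (l + 1)) (Function.update p l a) = nodal (range l) p * (X - C a) := by
  rw [nodal, prod_range_succ, Function.update_self]
  congr 1
  exact prod_congr rfl fun s hs => by rw [Function.update_of_ne (mem_range.1 hs).ne]

theorem nodes_injective {m : Fin n →₀ ℕ} (hm : Function.Injective m) :
    Function.Injective (nodes ℚ m) := fun i j h => hm (by simpa [nodes] using h)

theorem nodes_sub_single (R : Type*) [Ring R] {m : Fin n →₀ ℕ} {i : Fin n} {k : ℕ}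
    (hk : k ≤ m i) :
    nodes R (m - Finsupp.single i k) = Function.update (nodes R m) i (nodes R m i - k) := by
  ext j
  rcases eq_or_ne j i with rfl | hj
  · simp [nodes, Nat.cast_sub hk, sub_right_comm]
  · simp [nodes, hj]

theorem sum_sub_single_add {ι : Type*} [Fintype ι] {m : ι →₀ ℕ} {i : ι} {k : ℕ} (hk : k ≤ m i) :
    ∑ j, (m - Finsupp.single i k) j + k = ∑ j, m j := by
  classical
  rw [← add_sum_erase _ _ (mem_univ i), ← add_sum_erase _ m (mem_univ i)]
  have herase : ∑ j ∈ univ.erase i, (m - Finsupp.single i k) j = ∑ j ∈ univ.erase i, m j :=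
    sum_congr rfl fun j hj => by simp [(ne_of_mem_erase hj).symm]
  rw [herase, Finsupp.tsub_apply, Finsupp.single_eq_same]
  omega

/-- The residue of `H(z) ⋯ H(z - k + 1)` at `z = mᵢ - n`, where `H` belongs to the exponents `m`. -/
noncomputable def hookWeight (m : Fin n →₀ ℕ) (k : ℕ) (i : Fin n) : ℚ :=
  (m i).descFactorial k * (nodal univ (nodes ℚ m)).eval (nodes ℚ m i - k) *
    nodalWeight univ (nodes ℚ m) i

theorem le_of_hookWeight_ne_zero {m : Fin n →₀ ℕ} {k : ℕ} {i : Fin n}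
    (h : hookWeight m k i ≠ 0) : k ≤ m i := by
  by_contra hk
  exact h (by simp [hookWeight, Nat.descFactorial_of_lt (not_le.1 hk)])

theorem injective_sub_single_of_hookWeight_ne_zero {m : Fin n →₀ ℕ}
    (hm : Function.Injective m) {k : ℕ} {i : Fin n} (h : hookWeight m k i ≠ 0) :
    Function.Injective (m - Finsupp.single i k) := by
  have hk := le_of_hookWeight_ne_zero h
  have hne (j : Fin n) : m j + k ≠ m i := fun hj => h <| by
    have hnode : nodes ℚ m i - k = nodes ℚ m j := by
      rw [nodes, nodes, ← hj]
      push_cast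
      ring
    rw [hookWeight, hnode, eval_nodal_at_node (mem_univ j), mul_zero, zero_mul]
  intro a b hab
  have ha := hne a
  have hb := hne b
  simp only [Finsupp.tsub_apply, Finsupp.single_apply] at hab
  refine hm ?_
  split_ifs at hab with hia hib hib
  · rw [← hia, ← hib]
  · subst hia
    omega
  · subst hib
    omega
  · omega

theorem residue_nodal_nodes {m : Fin n →₀ ℕ} (hm : Function.Injective m) (k : ℕ) (N : ℚ[X]) :
    residue ((descPochhammer ℚ k).comp (X + C (n : ℚ)) *
        (nodal univ (nodes ℚ m)).comp (X - C (k : ℚ)) * N) (nodal univ (nodes ℚ m)) =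
      ∑ i, hookWeight m k i * N.eval (nodes ℚ m i) := by
  rw [residue_nodal (nodes_injective hm).injOn]
  refine sum_congr rfl fun i _ => ?_
  have hdesc : (descPochhammer ℚ k).eval (nodes ℚ m i + n) = (m i).descFactorial k := by
    rw [nodes, sub_add_cancel, descPochhammer_eval_eq_descFactorial]
  simp only [eval_mul, eval_comp, eval_add, eval_sub, eval_X, eval_C, hdesc, hookWeight]
  ring

/-- The current exponents, together with the poles at which the first variables have been
evaluated. -/
abbrev State (n : ℕ) : Type := (Fin n →₀ ℕ) × (ℕ → ℚ)

variable (μ : Fin n →₀ ℕ) (ks : ℕ → ℕ) (l : ℕ)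

/-- Evaluate `z_{l+1}` at the `i`-th pole and remove a rim hook of length `k_{l+1}` from the
`i`-th exponent. -/
noncomputable def removeHook (st : State n) (i : Fin n) : State n :=
  (st.1 - Finsupp.single i (ks l), Function.update st.2 l (nodes ℚ st.1 i))

/-- The weighted sum of `g` over the states obtained by removing one hook. -/
noncomputable def hookSum (g : State n → ℚ) (st : State n) : ℚ :=
  ∑ i, hookWeight st.1 (ks l) i * g (removeHook ks l st i)

/-- The weighted sum of `g` over all sequences of `l` hook removals starting from `μ`. -/
noncomputable def pathSum : ℕ → (State n → ℚ) → ℚ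
  | 0, g => g (μ, 0)
  | l + 1, g => pathSum l (hookSum ks l g)

/-- The invariants of a state reached from `μ` after `l` hook removals of nonzero weight. By
`nodal_mul`, the cross factors with the variables already evaluated turn the transform `H` of `μ`
into that of the current exponents, so the next residues are again of the form `hookWeight`. -/
structure Reachable (st : State n) : Prop where
  injective : Function.Injective st.1
  sum_add : ∑ i, st.1 i + ∑ s ∈ range l, ks s = ∑ i, μ i
  nodal_mul : nodal univ (nodes ℚ st.1) * nodal (range l) st.2 = freePoles μ ks l st.2

variable {μ ks l}

theorem reachable_zero (hμ : Function.Injective μ) : Reachable μ ks 0 (μ, 0) :=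
  ⟨hμ, by simp, by simp [freePoles]⟩

theorem Reachable.step {st : State n} (h : Reachable μ ks l st) {i : Fin n}
    (hi : hookWeight st.1 (ks l) i ≠ 0) : Reachable μ ks (l + 1) (removeHook ks l st i) where
  injective := injective_sub_single_of_hookWeight_ne_zero h.injective hi
  sum_add := by
    have hsum := sum_sub_single_add (le_of_hookWeight_ne_zero hi)
    have := h.sum_add
    rw [sum_range_succ, removeHook]
    dsimp only
    omega
  nodal_mul := by
    obtain ⟨m, p⟩ := st
    set a := nodes ℚ m i with ha
    have hm : nodal univ (nodes ℚ (m - Finsupp.single i (ks l))) * (X - C a) =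
        nodal univ (nodes ℚ m) * (X - C (a - ks l)) := by
      rw [nodes_sub_single ℚ (le_of_hookWeight_ne_zero hi)]
      exact nodal_update_mul (mem_univ i) _ _
    have hshift : (fun s => Function.update p l a s - (ks s : ℚ)) =
        Function.update (fun s => p s - (ks s : ℚ)) l (a - ks l) := by
      ext s
      rcases eq_or_ne s l with rfl | hs <;> simp [*]
    have hp := h.nodal_mul
    simp only [removeHook, freePoles, ← ha, hshift,
      nodal_range_succ_update] at hp ⊢
    linear_combination nodal (range l) p * hm + (X - C (a - ks l)) * hp

theorem Reachable.evalAt_elim_eq_hookSum {st : State n} (h : Reachable μ ks l st)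
    (P : MvPolynomial ℕ ℤ) :
    evalAt st.2 (elim μ ks l P) = hookSum ks l (fun st => evalAt st.2 P) st := by
  obtain ⟨m, p⟩ := st
  rw [evalAt_elim, residue_congr (monic_stepDen μ ks l p) nodal_monic
    (N' := (descPochhammer ℚ (ks l)).comp (X + C (n : ℚ)) *
      (nodal univ (nodes ℚ m)).comp (X - C (ks l : ℚ)) * evalAt (Function.update (C ∘ p) l X) P),
    residue_nodal_nodes h.injective, hookSum]
  · exact sum_congr rfl fun i _ => by rw [eval_evalAt_update, removeHook]
  · rw [stepNum, stepDen, ← h.nodal_mul, mul_comp]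
    ring

theorem pathSum_congr (hμ : Function.Injective μ) {g g' : State n → ℚ}
    (h : ∀ st, Reachable μ ks l st → g st = g' st) : pathSum μ ks l g = pathSum μ ks l g' := by
  induction l generalizing g g' with
  | zero => exact h _ (reachable_zero hμ)
  | succ l ih =>
    refine ih fun st hst => sum_congr rfl fun i _ => ?_
    by_cases hi : hookWeight st.1 (ks l) i = 0
    · rw [hi, zero_mul, zero_mul]
    · rw [h _ (hst.step hi)]

theorem extractInv_integrand_mul_evalAt {lam : Fin n → ℕ}
    (hlam : Function.Injective (shiftedParts n lam)) (ks : ℕ → ℕ) (l : ℕ)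
    (P : MvPolynomial ℕ ℤ) :
    extractInv l (integrand lam ks l (zVar l) * evalAt (zVar l) P) =
      pathSum (shiftedParts n lam) ks l fun st => evalAt st.2 P := by
  induction l generalizing P with
  | zero =>
    rw [integrand, range_zero, prod_empty, prod_empty, mul_one, one_mul]
    rfl
  | succ l ih =>
    rw [extractInv_integrand_succ, ih]
    exact pathSum_congr hlam fun st hst => hst.evalAt_elim_eq_hookSum P

end PathSum

section Alternating

open MvPolynomial

theorem coeff_psum_mul {σ R : Type*} [Fintype σ] [CommSemiring R] (m : σ →₀ ℕ) (k : ℕ)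
    (q : MvPolynomial σ R) :
    coeff m (psum σ R k * q) =
      ∑ i, if k ≤ m i then coeff (m - Finsupp.single i k) q else 0 := by
  simp [psum, sum_mul, coeff_sum, X_pow_eq_monomial, coeff_monomial_mul', Finsupp.single_le_iff]

theorem prod_factorial_mul_coeff_psum_one_pow {σ R : Type*} [Fintype σ] [CommSemiring R]
    (d : σ →₀ ℕ) :
    (∏ i, ((d i).factorial : R)) * coeff d (psum σ R 1 ^ ∑ i, d i) =
      ((∑ i, d i).factorial : R) := by
  have hsum : d.sum (fun _ a => a) = ∑ i, d i := d.sum_fintype _ fun _ => rfl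
  simp only [psum, pow_one]
  rw [coeff_sum_X_pow_of_fintype, if_pos hsum,
    Finsupp.multinomial_eq_of_support_subset (subset_univ _)]
  exact_mod_cast congrArg (Nat.cast (R := R)) (Nat.multinomial_spec univ d)

theorem coeff_psum_one_pow_mul_prod_X_pow {σ R : Type*} [Fintype σ] [CommSemiring R]
    (m : σ →₀ ℕ) (e : σ → ℕ) {N : ℕ} (hN : ∑ i, m i = N + ∑ i, e i) :
    (∏ i, ((m i).factorial : R)) * coeff m (psum σ R 1 ^ N * ∏ i, X i ^ e i) =
      N.factorial * ∏ i, ((m i).descFactorial (e i) : R) := by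
  set s : σ →₀ ℕ := Finsupp.equivFunOnFinite.symm e with hs
  have hX : ∏ i, (X i : MvPolynomial σ R) ^ e i = monomial s 1 := by
    rw [monomial_eq, C_1, one_mul, s.prod_fintype _ fun _ => pow_zero _]
    rfl
  rw [hX, coeff_mul_monomial', mul_one]
  split_ifs with hle
  · have hsum : ∑ i, (m - s) i = N := by
      have hsplit : ∑ i, (m - s) i + ∑ i, e i = ∑ i, m i := by
        rw [← sum_add_distrib]
        exact sum_congr rfl fun i _ => Nat.sub_add_cancel (hle i)
      omega
    have hfact : ∏ i, ((m i).factorial : R) =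
        (∏ i, (((m - s) i).factorial : R)) * ∏ i, ((m i).descFactorial (e i) : R) := by
      rw [← prod_mul_distrib]
      refine prod_congr rfl fun i _ => ?_
      rw [← Nat.factorial_mul_descFactorial (hle i), Nat.cast_mul]
      rfl
    have hmult := prod_factorial_mul_coeff_psum_one_pow (R := R) (m - s)
    rw [hsum] at hmult
    rw [hfact, mul_right_comm, hmult]
  · obtain ⟨i, hi⟩ : ∃ i, m i < e i := by
      simpa [hs, Finsupp.le_def] using hle
    rw [mul_zero, prod_eq_zero (mem_univ i), mul_zero]
    rw [Nat.descFactorial_of_lt hi, Nat.cast_zero]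

/-- Polynomials that change by the sign of a permutation of the variables. -/
def IsAlternating {σ R : Type*} [Fintype σ] [DecidableEq σ] [CommRing R]
    (q : MvPolynomial σ R) : Prop :=
  ∀ e : Equiv.Perm σ, rename e q = (Equiv.Perm.sign e : ℤ) • q

section

variable {σ R : Type*} [Fintype σ] [DecidableEq σ] [CommRing R] {p q : MvPolynomial σ R}

theorem IsAlternating.symmetric_mul (hq : IsAlternating q) (hp : p.IsSymmetric) :
    IsAlternating (p * q) := fun e => by
  rw [map_mul, hp e, hq e, mul_smul_comm]

theorem IsAlternating.coeff_eq_zero [IsAddTorsionFree R] (hq : IsAlternating q) {m : σ →₀ ℕ}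
    (hm : ¬Function.Injective m) : coeff m q = 0 := by
  obtain ⟨i, j, hij, hne⟩ := Function.not_injective_iff.1 hm
  have hswap : m.mapDomain (Equiv.swap i j) = m := by
    ext a
    rw [Finsupp.mapDomain_equiv_apply, Equiv.symm_swap, Equiv.swap_apply_def]
    split_ifs with hai haj
    · rw [hai, hij]
    · rw [haj, hij]
    · rfl
  have hcoeff := coeff_rename_mapDomain _ (Equiv.swap i j).injective q m
  rw [hswap, hq, Equiv.Perm.sign_swap hne] at hcoeff
  exact self_eq_neg.1 (by simpa using hcoeff.symm)

end

/-- The alternant of `x^δ`, which multiplies the power sums in Frobenius' formula. -/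
noncomputable def alternant (n : ℕ) : MvPolynomial (Fin n) ℤ :=
  ∑ w : Equiv.Perm (Fin n), C ((Equiv.Perm.sign w : ℤ)) *
    ∏ i : Fin n, X i ^ (n - 1 - ((w i : ℕ)))

theorem isAlternating_alternant (n : ℕ) : IsAlternating (alternant n) := fun e => by
  rw [alternant, map_sum, smul_sum, ← Equiv.sum_comp (Equiv.mulRight e)]
  refine sum_congr rfl fun w _ => ?_
  simp only [Equiv.coe_mulRight, map_mul, rename_C, map_prod, map_pow,
    rename_X, Units.val_mul, zsmul_eq_mul]
  rw [← Equiv.prod_comp e fun i => X i ^ (n - 1 - ((w i : ℕ)))]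
  simp only [Equiv.Perm.mul_apply, eq_intCast]
  ring

end Alternating

section Vandermonde

open Polynomial

variable {n : ℕ}

theorem det_vandermonde_update {F : Type*} [Field F] {v : Fin n → F}
    (hv : Function.Injective v) (i : Fin n) (a : F) :
    (Matrix.vandermonde (Function.update v i a)).det =
      (Lagrange.basis univ v i).eval a * (Matrix.vandermonde v).det := by
  have hpow (j : Fin n) :
      a ^ (j : ℕ) = ∑ r, (Lagrange.basis univ v r).eval a * v r ^ (j : ℕ) := by
    have hdeg : (X ^ (j : ℕ) : F[X]).degree < #(univ : Finset (Fin n)) := by simp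
    have h := congrArg (eval a) (eq_interpolate hv.injOn hdeg)
    simpa [interpolate_apply, eval_finsetSum, mul_comm] using h
  have hrow : Matrix.vandermonde (Function.update v i a) = (Matrix.vandermonde v).updateRow i
      (∑ r, (Lagrange.basis univ v r).eval a • Matrix.vandermonde v r) := by
    ext r j
    rcases eq_or_ne r i with rfl | hr
    · simp [Matrix.vandermonde_apply, hpow]
    · simp [Matrix.vandermonde_apply, hr]
  rw [hrow, Matrix.det_updateRow_sum, smul_eq_mul]

/-- The Vandermonde determinant `det (mᵢ ^ (n - 1 - j))`, with the exponents translated to the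
nodes. -/
noncomputable def exponentVandermonde (m : Fin n →₀ ℕ) : ℚ :=
  ((Matrix.vandermonde (nodes ℚ m)).submatrix id Fin.revPerm).det

theorem exponentVandermonde_ne_zero {m : Fin n →₀ ℕ} (hm : Function.Injective m) :
    exponentVandermonde m ≠ 0 := by
  rw [exponentVandermonde, Matrix.det_permute']
  exact mul_ne_zero (by simp) (Matrix.det_vandermonde_ne_zero_iff.2 (nodes_injective hm))

theorem exponentVandermonde_sub_single {m : Fin n →₀ ℕ} (hm : Function.Injective m) {k : ℕ}
    {i : Fin n} (hk : k ≤ m i) :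
    exponentVandermonde (m - Finsupp.single i k) =
      (Lagrange.basis univ (nodes ℚ m) i).eval (nodes ℚ m i - k) * exponentVandermonde m := by
  rw [exponentVandermonde, exponentVandermonde, Matrix.det_permute', Matrix.det_permute',
    nodes_sub_single ℚ hk, det_vandermonde_update (nodes_injective hm), mul_left_comm]

theorem sum_sign_mul_prod_descFactorial (m : Fin n →₀ ℕ) :
    ∑ w : Equiv.Perm (Fin n), ((Equiv.Perm.sign w : ℤ) : ℚ) *
      ∏ i, ((m i).descFactorial (n - 1 - (w i : ℕ)) : ℚ) = exponentVandermonde m := by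
  set P : Fin n → ℚ[X] := fun j => (descPochhammer ℚ j).comp (X + C (n : ℚ)) with hP
  have hdeg (j : Fin n) : (P j).natDegree = j := by
    rw [hP, natDegree_comp, descPochhammer_natDegree, natDegree_X_add_C, mul_one]
  have hmonic (j : Fin n) : (P j).Monic := (monic_descPochhammer ℚ j).comp_X_add_C _
  have heval (i j : Fin n) : (P j).eval (nodes ℚ m i) = (m i).descFactorial j := by
    simp [hP, nodes, descPochhammer_eval_eq_descFactorial]
  rw [exponentVandermonde, Matrix.det_permute',
    Matrix.det_eval_matrixOfPolynomials_eq_det_vandermonde _ P hdeg hmonic,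
    ← Matrix.det_permute', ← Matrix.det_transpose, Matrix.det_apply']
  refine sum_congr rfl fun w _ => ?_
  congr 1
  refine prod_congr rfl fun i _ => ?_
  rw [Matrix.transpose_apply, Matrix.submatrix_apply, Matrix.of_apply, id, heval,
    Fin.revPerm_apply, Fin.val_rev, Nat.sub_sub, add_comm 1]

end Vandermonde

section Character

open MvPolynomial (coeff psum)

variable {n : ℕ}

/-- The coefficient of `x ^ m` in `q`, normalized so that the Murnaghan–Nakayama rule acquires the
residues `hookWeight` as weights. -/
noncomputable def normCoeff (q : MvPolynomial (Fin n) ℤ) (m : Fin n →₀ ℕ) : ℚ :=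
  coeff m q * (∏ i, ((m i).factorial : ℚ)) / exponentVandermonde m

theorem prod_factorial_sub_single {ι : Type*} [Fintype ι] {m : ι →₀ ℕ} {i : ι} {k : ℕ}
    (hk : k ≤ m i) :
    (m i).descFactorial k * ∏ j, ((m - Finsupp.single i k) j).factorial =
      ∏ j, (m j).factorial := by
  classical
  have herase : ∏ j ∈ univ.erase i, ((m - Finsupp.single i k) j).factorial =
      ∏ j ∈ univ.erase i, (m j).factorial :=
    prod_congr rfl fun j hj => by simp [(ne_of_mem_erase hj).symm]
  rw [← mul_prod_erase _ _ (mem_univ i), ← mul_prod_erase _ _ (mem_univ i), herase,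
    Finsupp.tsub_apply, Finsupp.single_eq_same, ← mul_assoc, mul_comm (Nat.descFactorial _ _),
    Nat.factorial_mul_descFactorial hk]

theorem hookWeight_eq {m : Fin n →₀ ℕ} (k : ℕ) (i : Fin n) :
    hookWeight m k i = -k * ((m i).descFactorial k *
      (Lagrange.basis univ (nodes ℚ m) i).eval (nodes ℚ m i - k)) := by
  rcases eq_or_ne k 0 with rfl | hk
  · simp [hookWeight, eval_nodal_at_node (mem_univ i)]
  have hk' : (k : ℚ) ≠ 0 := mod_cast hk
  rw [hookWeight, eval_basis_not_at_node (mem_univ i) (by simpa using hk'), sub_sub_cancel_left]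
  field_simp

theorem hookWeight_mul_normCoeff {q : MvPolynomial (Fin n) ℤ} (hq : IsAlternating q)
    {m : Fin n →₀ ℕ} (hm : Function.Injective m) (k : ℕ) (i : Fin n) :
    hookWeight m k i * normCoeff q (m - Finsupp.single i k) =
      -k * ((if k ≤ m i then coeff (m - Finsupp.single i k) q else 0 : ℤ) *
        (∏ i, ((m i).factorial : ℚ)) / exponentVandermonde m) := by
  split_ifs with hk
  · by_cases hinj : Function.Injective (m - Finsupp.single i k)
    · have hV := exponentVandermonde_ne_zero hinj
      have hfact : ((m i).descFactorial k : ℚ) *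
          ∏ j, (((m - Finsupp.single i k) j).factorial : ℚ) = ∏ j, ((m j).factorial : ℚ) :=
        mod_cast prod_factorial_sub_single hk
      rw [exponentVandermonde_sub_single hm hk] at hV
      have hbasis := left_ne_zero_of_mul hV
      have hVm := right_ne_zero_of_mul hV
      rw [normCoeff, hookWeight_eq, exponentVandermonde_sub_single hm hk, ← hfact]
      field_simp
    · simp [normCoeff, hq.coeff_eq_zero hinj]
  · simp [hookWeight, Nat.descFactorial_of_lt (not_le.1 hk)]

theorem sum_hookWeight_mul_normCoeff {q : MvPolynomial (Fin n) ℤ} (hq : IsAlternating q)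
    {m : Fin n →₀ ℕ} (hm : Function.Injective m) (k : ℕ) :
    ∑ i, hookWeight m k i * normCoeff q (m - Finsupp.single i k) =
      -k * normCoeff (psum (Fin n) ℤ k * q) m := by
  simp only [hookWeight_mul_normCoeff hq hm, ← mul_sum, ← sum_div, ← sum_mul]
  rw [normCoeff, coeff_psum_mul, Int.cast_sum]

theorem sum_rev_perm (w : Equiv.Perm (Fin n)) :
    ∑ i, (n - 1 - (w i : ℕ)) = ∑ i ∈ range n, i := by
  rw [Equiv.sum_comp w fun i => n - 1 - (i : ℕ), Fin.sum_univ_eq_sum_range fun i => n - 1 - i,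
    sum_range_reflect fun i => i]

theorem coeff_psum_one_pow_mul_alternant {m : Fin n →₀ ℕ} {N : ℕ}
    (hN : ∑ i, m i = N + ∑ i ∈ range n, i) :
    coeff m (psum (Fin n) ℤ 1 ^ N * alternant n) * ∏ i, ((m i).factorial : ℚ) =
      N.factorial * exponentVandermonde m := by
  rw [alternant, mul_sum, MvPolynomial.coeff_sum, Int.cast_sum, sum_mul,
    ← sum_sign_mul_prod_descFactorial, mul_sum]
  refine sum_congr rfl fun w _ => ?_
  have hw := coeff_psum_one_pow_mul_prod_X_pow (R := ℤ) m (fun i => n - 1 - (w i : ℕ))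
    (hN.trans (congrArg _ (sum_rev_perm w).symm))
  have hw' := congrArg (Int.cast (R := ℚ)) hw
  push_cast at hw'
  rw [mul_left_comm, MvPolynomial.coeff_C_mul, Int.cast_mul]
  linear_combination ((Equiv.Perm.sign w : ℤ) : ℚ) * hw'

theorem normCoeff_psum_one_pow_mul_alternant {m : Fin n →₀ ℕ} (hm : Function.Injective m)
    {N : ℕ} (hN : ∑ i, m i = N + ∑ i ∈ range n, i) :
    normCoeff (psum (Fin n) ℤ 1 ^ N * alternant n) m = N.factorial := by
  rw [normCoeff, coeff_psum_one_pow_mul_alternant hN,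
    mul_div_cancel_right₀ _ (exponentVandermonde_ne_zero hm)]

theorem pathSum_normCoeff {μ : Fin n →₀ ℕ} (hμ : Function.Injective μ) (ks : ℕ → ℕ) (l : ℕ)
    {q : MvPolynomial (Fin n) ℤ} (hq : IsAlternating q) (c : ℚ) :
    pathSum μ ks l (fun st => c * normCoeff q st.1) =
      c * (∏ s ∈ range l, -(ks s : ℚ)) *
        normCoeff ((∏ s ∈ range l, psum (Fin n) ℤ (ks s)) * q) μ := by
  induction l generalizing q c with
  | zero => simp [pathSum]
  | succ l ih =>
    have hstep (st : State n) (hst : Reachable μ ks l st) :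
        hookSum ks l (fun st => c * normCoeff q st.1) st =
          c * -ks l * normCoeff (psum (Fin n) ℤ (ks l) * q) st.1 := by
      rw [mul_assoc, ← sum_hookWeight_mul_normCoeff hq hst.injective, mul_sum]
      exact sum_congr rfl fun i _ => mul_left_comm _ _ _
    rw [pathSum, pathSum_congr hμ hstep,
      ih (hq.symmetric_mul (MvPolynomial.psum_isSymmetric _ _ _)), prod_range_succ,
      prod_range_succ, ← mul_assoc (∏ s ∈ range l, psum (Fin n) ℤ (ks s))]
    ring

theorem sum_range_le_sum_of_injective {m : Fin n → ℕ} (hm : Function.Injective m) :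
    ∑ i ∈ range n, i ≤ ∑ i, m i := by
  have hinj : Function.Injective fun i => (m i : ℤ) := Nat.cast_injective.comp hm
  have hle := sum_range_le_sum (s := univ.image fun i => (m i : ℤ)) (c := 0) (by simp)
  rw [card_image_of_injective _ hinj, sum_image fun a _ b _ hab => hinj hab] at hle
  zify
  simpa using hle

theorem shiftedParts_injective {lam : Fin n → ℕ} (hanti : ∀ i j : Fin n, i ≤ j → lam j ≤ lam i) :
    Function.Injective (shiftedParts n lam) := by
  have hstrict : StrictAnti (shiftedParts n lam) := fun i j hij => by
    have := hanti i j hij.le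
    simp only [shiftedParts, Finsupp.equivFunOnFinite_symm_apply_apply]
    omega
  exact hstrict.injective

theorem sum_shiftedParts (lam : Fin n → ℕ) :
    ∑ i, shiftedParts n lam i = ∑ i, lam i + ∑ i ∈ range n, i := by
  simp only [shiftedParts, Finsupp.equivFunOnFinite_symm_apply_apply]
  rw [sum_add_distrib, ← sum_rev_perm 1]
  rfl

theorem frobChar_eq_coeff (lam : Fin n → ℕ) (k : Multiset ℕ) (N : ℕ) :
    frobChar n lam (k + Multiset.replicate N 1) =
      coeff (shiftedParts n lam)
        ((k.map (psum (Fin n) ℤ)).prod * (psum (Fin n) ℤ 1 ^ N * alternant n)) := by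
  rw [frobChar, Multiset.map_add, Multiset.prod_add, Multiset.map_replicate,
    Multiset.prod_replicate, mul_assoc]
  rfl

theorem frobChar_one_mul_prod_factorial {lam : Fin n → ℕ} (hsum : ∑ i, lam i = n) :
    frobChar n lam (Multiset.replicate n 1) * ∏ i, ((shiftedParts n lam i).factorial : ℚ) =
      n.factorial * exponentVandermonde (shiftedParts n lam) := by
  have hfrob := frobChar_eq_coeff lam 0 n
  rw [zero_add, Multiset.map_zero, Multiset.prod_zero, one_mul] at hfrob
  rw [hfrob, coeff_psum_one_pow_mul_alternant (by rw [sum_shiftedParts, hsum])]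

theorem SigmaChar_eq_normCoeff {lam : Fin n → ℕ} (hlam : Function.Injective (shiftedParts n lam))
    (hsum : ∑ i, lam i = n) {k : Multiset ℕ} (hk : k.sum ≤ n) :
    SigmaChar n lam k = ((n - k.sum).factorial : ℚ)⁻¹ *
      normCoeff ((k.map (psum (Fin n) ℤ)).prod *
        (psum (Fin n) ℤ 1 ^ (n - k.sum) * alternant n)) (shiftedParts n lam) := by
  have hdim := frobChar_one_mul_prod_factorial hsum
  have hV := exponentVandermonde_ne_zero hlam
  have hne (a : ℕ) : (a.factorial : ℚ) ≠ 0 := mod_cast a.factorial_ne_zero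
  have hfact : ((n - k.sum).factorial : ℚ) * n.descFactorial k.sum = n.factorial :=
    mod_cast Nat.factorial_mul_descFactorial hk
  have hdim₀ : (frobChar n lam (Multiset.replicate n 1) : ℚ) ≠ 0 :=
    left_ne_zero_of_mul (hdim ▸ mul_ne_zero (hne n) hV)
  have hfact₀ := hne (n - k.sum)
  rw [SigmaChar, if_pos hk, frobChar_eq_coeff, normCoeff]
  generalize coeff _ (_ * _ : MvPolynomial (Fin n) ℤ) = a
  rw [← hfact] at hdim
  field_simp
  linear_combination -a * hdim

theorem pathSum_one {lam : Fin n → ℕ} (hlam : Function.Injective (shiftedParts n lam))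
    (hsum : ∑ i, lam i = n) (ks : ℕ → ℕ) (l : ℕ) :
    pathSum (shiftedParts n lam) ks l (fun _ => 1) =
      (∏ s ∈ range l, -(ks s : ℚ)) * SigmaChar n lam ((range l).val.map ks) := by
  set K := ∑ s ∈ range l, ks s
  set c : ℚ := if K ≤ n then ((n - K).factorial : ℚ)⁻¹ else 0 with hc
  set q := psum (Fin n) ℤ 1 ^ (n - K) * alternant n with hq
  have hq_alt : IsAlternating q := (isAlternating_alternant n).symmetric_mul fun e => by
    rw [map_pow, MvPolynomial.psum_isSymmetric _ _ _ e]
  have hone (st : State n) (hst : Reachable (shiftedParts n lam) ks l st) :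
      1 = c * normCoeff q st.1 := by
    have hst_sum := hst.sum_add
    have hst_le := sum_range_le_sum_of_injective hst.injective
    rw [sum_shiftedParts, hsum] at hst_sum
    rw [hc, if_pos (by omega), hq,
      normCoeff_psum_one_pow_mul_alternant hst.injective (by omega), inv_mul_cancel₀]
    exact_mod_cast (n - K).factorial_ne_zero
  rw [pathSum_congr hlam hone, pathSum_normCoeff hlam ks l hq_alt, hc]
  have hsumK : ((range l).val.map ks).sum = K := rfl
  split_ifs with hKn
  · rw [SigmaChar_eq_normCoeff hlam hsum (hsumK.trans_le hKn), Multiset.map_map, hsumK,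
      mul_assoc, mul_left_comm]
    rfl
  · rw [SigmaChar, if_neg (hsumK ▸ hKn)]
    simp

end Character

section Reindex

theorem prod_filter_lt_eq_prod_range {M : Type*} [CommMonoid M] (l : ℕ) (f : ℕ → ℕ → M) :
    ∏ p : Fin l × Fin l with p.1 < p.2, f p.1 p.2 = ∏ t ∈ range l, ∏ s ∈ range t, f s t := by
  rw [prod_filter, Fintype.prod_prod_type_right,
    ← Fin.prod_univ_eq_prod_range fun t => ∏ s ∈ range t, f s t]
  refine prod_congr rfl fun t _ => ?_
  simp only [Fin.lt_def]
  rw [Fin.prod_univ_eq_prod_range fun s => if s < (t : ℕ) then f s t else 1, ← prod_filter]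
  congr 1
  ext s
  simp only [mem_filter, mem_range]
  omega

theorem integrand_eq_prod_fin {F : Type} [Field F] {n : ℕ} (lam : Fin n → ℕ) (ks : ℕ → ℕ) (l : ℕ)
    (z : ℕ → F) :
    integrand lam ks l z = (∏ r : Fin l, ∏ j ∈ range (ks r), Hof n lam (z r - j)) *
      ∏ p : Fin l × Fin l with p.1 < p.2, cross (z p.1) (z p.2) (ks p.1) (ks p.2) := by
  rw [integrand, Fin.prod_univ_eq_prod_range fun r => ∏ j ∈ range (ks r), Hof n lam (z r - j),
    prod_filter_lt_eq_prod_range l fun s t => cross (z s) (z t) (ks s) (ks t)]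

theorem map_univ_val_eq_map_range {α : Type*} (l : ℕ) (f : ℕ → α) :
    (univ : Finset (Fin l)).val.map (fun r : Fin l => f r) = (range l).val.map f := by
  rw [← Nat.Iio_eq_range, ← Fin.map_valEmbedding_univ, map_val, Multiset.map_map]
  rfl

end Reindex

end GeneralizedFrobenius

/-- generalized Frobenius formula: for a partition `λ` of `n` with
reciprocal Cauchy transform `H` and integers `k₁,…,k_l ≥ 1` (here `k r` is `k_{r+1}`),
`(-1)^l k₁⋯k_l Σ^λ_{k₁,…,k_l} = [z₁^{-1}]⋯[z_l^{-1}] [∏_r H(z_r)⋯H(z_r-k_r+1) ⋅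
∏_{s<t} (z_s-z_t)(z_s-z_t+k_t-k_s) / ((z_s-z_t-k_s)(z_s-z_t+k_t))]`. -/
theorem generalized_frobenius_formula (n : ℕ) (lam : Fin n → ℕ)
    (hanti : ∀ i j : Fin n, i ≤ j → lam j ≤ lam i)
    (hsum : ∑ i, lam i = n)
    (l : ℕ) (k : Fin l → ℕ) (hk : ∀ r, 1 ≤ k r) :
    (-1 : ℚ) ^ l * (∏ r, (k r : ℚ)) *
        SigmaChar n lam (Multiset.map k Finset.univ.val) =
      extractInv l
        ((∏ r : Fin l, ∏ j ∈ Finset.range (k r),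
            Hof n lam (zVar l r - (j : ItLT l))) *
          ∏ p ∈ Finset.univ.filter (fun p : Fin l × Fin l => p.1 < p.2),
            ((zVar l p.1 - zVar l p.2) *
                (zVar l p.1 - zVar l p.2 + (k p.2 : ItLT l) - (k p.1 : ItLT l))) /
              ((zVar l p.1 - zVar l p.2 - (k p.1 : ItLT l)) *
                (zVar l p.1 - zVar l p.2 + (k p.2 : ItLT l)))) := by
  obtain ⟨ks, rfl⟩ : ∃ ks : ℕ → ℕ, k = fun r : Fin l => ks r :=
    ⟨Function.extend Fin.val k 0, funext fun r => (Fin.val_injective.extend_apply k 0 r).symm⟩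
  have hlam := GeneralizedFrobenius.shiftedParts_injective hanti
  have hextract := GeneralizedFrobenius.extractInv_integrand_mul_evalAt hlam ks l 1
  simp only [map_one, mul_one] at hextract
  rw [GeneralizedFrobenius.pathSum_one hlam hsum, Finset.prod_neg, Finset.card_range,
    GeneralizedFrobenius.integrand_eq_prod_fin] at hextract
  rw [GeneralizedFrobenius.map_univ_val_eq_map_range,
    Fin.prod_univ_eq_prod_range fun r => (ks r : ℚ)]
  exact hextract.symm
end
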